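/- arXiv:1708.00505 — 2 statements merged into one kernel-verified Lean document; each statement's English description precedes it below -/
import Mathlib

section
/- Let b > 0, let q : ℝ → ℂ be continuous on [−b,b], let f solve f'' − q f = 0 on [−b,b] with f(0) = 1, f'(0) = 0, and assume f(x) ≠ 0 on [−b,b]. For ω ∈ ℂ let u(ω,·) be the solution of y'' − q(x)y = −ω² y on [−b,b] with y(0) = 1, y'(0) = iω. Then for every ω ∈ ℂ and every x ∈ (0,b], u(ω,x) = e^{iωx} + Σ_{n=0}^{∞} β_n(x) ∫_{−1}^{1} P_n(y) e^{iωxy} dy, where β_n(x) = ((2n+1)/2)·(Σ_{k=0}^{n} l_{k,n} φ_k(x)/x^k − 1), and for each fixed ω the series converges uniformly with respect to x on compact subsets of (0,b]. -/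
open MeasureTheory Set Filter Finset Complex Topology

noncomputable section

/-- The iterated integrals X⁽ⁿ⁾: X⁽⁰⁾ ≡ 1, X⁽ⁿ⁾(x) = n ∫₀ˣ X⁽ⁿ⁻¹⁾(s) (f(s)²)^((−1)ⁿ) ds. -/
def formalX (f : ℝ → ℂ) : ℕ → ℝ → ℂ
  | 0 => fun _ => 1
  | n + 1 => fun x =>
      (n + 1 : ℂ) * ∫ s in (0:ℝ)..x, formalX f n s * ((f s) ^ 2) ^ ((-1 : ℤ) ^ (n + 1))

/-- The iterated integrals X̃⁽ⁿ⁾: X̃⁽⁰⁾ ≡ 1, X̃⁽ⁿ⁾(x) = n ∫₀ˣ X̃⁽ⁿ⁻¹⁾(s) (f(s)²)^((−1)^(n−1)) ds. -/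
def formalXt (f : ℝ → ℂ) : ℕ → ℝ → ℂ
  | 0 => fun _ => 1
  | n + 1 => fun x =>
      (n + 1 : ℂ) * ∫ s in (0:ℝ)..x, formalXt f n s * ((f s) ^ 2) ^ ((-1 : ℤ) ^ n)

/-- The formal powers φₖ: φₖ = f·X⁽ᵏ⁾ for odd k, φₖ = f·X̃⁽ᵏ⁾ for even k. -/
def formalPower (f : ℝ → ℂ) (k : ℕ) (x : ℝ) : ℂ :=
  if Odd k then f x * formalX f k x else f x * formalXt f k x

/-- The Legendre polynomial Pₙ via Rodrigues' formula. -/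
def legendreP (n : ℕ) : Polynomial ℝ :=
  ((1 : ℝ) / (2 ^ n * n.factorial)) • Polynomial.derivative^[n] ((Polynomial.X ^ 2 - 1) ^ n)

/-- βₙ(x) = ((2n+1)/2)·(Σₖ l_{k,n} φₖ(x)/xᵏ − 1), where l_{k,n} is the coefficient of xᵏ in Pₙ. -/
def betaCoef (f : ℝ → ℂ) (n : ℕ) (x : ℝ) : ℂ :=
  ((2 * n + 1 : ℂ) / 2) *
    ((∑ k ∈ Finset.range (n + 1), ((legendreP n).coeff k : ℂ) * formalPower f k x / (x : ℂ) ^ k) - 1)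

/-!
With `z = iω`, the quotient `y / f` and the Wronskian of `f` and `y` satisfy a first-order linear
system with coefficients `z f⁻²` and `z f²`. The iterated integrals in its Peano–Baker series are
those of the formal powers, so `y(x) = ∑ₖ zᵏ/k! φₖ(x)`. Subtracting the exponential series leaves
`∑ₖ (zx)ᵏ/k! γₖ` with `γₖ = φₖ(x)/xᵏ - 1 = O(Mᵏ)` uniformly in `x`.

Let `γ` also denote the linear functional on polynomials sending `tᵏ` to `γₖ`. The Legendre
expansion of `tᵏ` gives `γₖ = ∑ₙ (2n+1)/2 · γ(Pₙ) ∫₋₁¹ tᵏ Pₙ(t) dt`, a finite sum because `Pₙ` is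
orthogonal to lower degrees. Substituting this and summing over `k` first turns the moments of `Pₙ`
into `∫₋₁¹ Pₙ(t) exp(zxt) dt`, with coefficient `βₙ(x) = (2n+1)/2 · γ(Pₙ)`. Since only `k ≥ n`
contribute, exponential growth in `n` is absorbed by `1/k!`, and the series over `n` has a geometric
majorant independent of `x`.
-/

section Legendre

open Polynomial

/-- Integration over `[-1, 1]`, as a linear functional on real polynomials. -/
def polyIntegral : ℝ[X] →ₗ[ℝ] ℝ where
  toFun p := ∫ t in (-1 : ℝ)..1, p.eval t
  map_add' p r := by
    simpa only [eval_add] using intervalIntegral.integral_add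
      (p.continuous.intervalIntegrable _ _) (r.continuous.intervalIntegrable _ _)
  map_smul' c p := by
    simp only [eval_smul, intervalIntegral.integral_smul, RingHom.id_apply]

lemma polyIntegral_apply (p : ℝ[X]) : polyIntegral p = ∫ t in (-1 : ℝ)..1, p.eval t := rfl

lemma polyIntegral_derivative (p : ℝ[X]) :
    polyIntegral (derivative p) = p.eval 1 - p.eval (-1) :=
  intervalIntegral.integral_eq_sub_of_hasDerivAt (fun x _ => p.hasDerivAt x)
    ((derivative p).continuous.intervalIntegrable _ _)

lemma polyIntegral_mul_derivative {W : ℝ[X]} (h₁ : W.eval 1 = 0) (h₂ : W.eval (-1) = 0)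
    (p : ℝ[X]) : polyIntegral (p * derivative W) = -polyIntegral (derivative p * W) := by
  have h := polyIntegral_derivative (p * W)
  rw [derivative_mul, map_add, eval_mul, eval_mul, h₁, h₂] at h
  linarith

lemma polyIntegral_mul_iterate_derivative {W : ℝ[X]} {j : ℕ}
    (h₁ : ∀ i < j, (derivative^[i] W).eval 1 = 0) (h₂ : ∀ i < j, (derivative^[i] W).eval (-1) = 0)
    (p : ℝ[X]) :
    polyIntegral (p * derivative^[j] W) = (-1) ^ j * polyIntegral (derivative^[j] p * W) := by
  induction j generalizing p with
  | zero => simp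
  | succ j ih =>
    rw [Function.iterate_succ_apply', polyIntegral_mul_derivative (h₁ j j.lt_succ_self)
      (h₂ j j.lt_succ_self), ih (fun i hi => h₁ i (hi.trans j.lt_succ_self))
      (fun i hi => h₂ i (hi.trans j.lt_succ_self)), Function.iterate_succ_apply]
    ring

lemma X_sq_sub_one_pow_eq_mul {R : Type*} [CommRing R] {a : R} (ha : a ^ 2 = 1) (n : ℕ) :
    (X ^ 2 - 1 : R[X]) ^ n = (X - C a) ^ n * (X + C a) ^ n := by
  rw [← mul_pow, mul_comm, ← sq_sub_sq, ← C_pow, ha, C_1]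

lemma eval_iterate_derivative_X_sq_sub_one_pow_of_lt {R : Type*} [CommRing R] {a : R}
    (ha : a ^ 2 = 1) {j n : ℕ} (hj : j < n) :
    (derivative^[j] ((X ^ 2 - 1 : R[X]) ^ n)).eval a = 0 := by
  simpa using aeval_iterate_derivative_of_lt _ n a
    ((map_id (R := R)).trans (X_sq_sub_one_pow_eq_mul ha n)) hj

lemma eval_iterate_derivative_X_sq_sub_one_pow_self {R : Type*} [CommRing R] {a : R}
    (ha : a ^ 2 = 1) (n : ℕ) :
    (derivative^[n] ((X ^ 2 - 1 : R[X]) ^ n)).eval a = n.factorial * (2 * a) ^ n := by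
  have h := aeval_iterate_derivative_self _ n a
    ((map_id (R := R)).trans (X_sq_sub_one_pow_eq_mul ha n))
  simpa [two_mul] using h

lemma eval_legendreP {a : ℝ} (ha : a ^ 2 = 1) (n : ℕ) : (legendreP n).eval a = a ^ n := by
  rw [legendreP, eval_smul, eval_iterate_derivative_X_sq_sub_one_pow_self ha, smul_eq_mul, mul_pow]
  field_simp

lemma abs_coeff_X_sq_sub_one_pow_le (n m : ℕ) : |((X ^ 2 - 1 : ℝ[X]) ^ n).coeff m| ≤ 2 ^ n := by
  have h : (X ^ 2 - 1 : ℝ[X]) ^ n = expand ℝ 2 ((X + C (-1)) ^ n) := by simp [sub_eq_add_neg]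
  rw [h, coeff_expand two_pos, coeff_X_add_C_pow]
  split_ifs
  · rw [abs_mul, abs_neg_one_pow, one_mul, Nat.abs_cast]
    exact_mod_cast Nat.choose_le_two_pow n (m / 2)
  · simp

lemma coeff_legendreP (n k : ℕ) :
    (legendreP n).coeff k =
      1 / 2 ^ n * (k + n).choose n * ((X ^ 2 - 1 : ℝ[X]) ^ n).coeff (k + n) := by
  rw [legendreP, coeff_smul, coeff_iterate_derivative, Nat.descFactorial_eq_factorial_mul_choose,
    nsmul_eq_mul, smul_eq_mul]
  push_cast
  field_simp

lemma monic_X_sq_sub_one : (X ^ 2 - 1 : ℝ[X]).Monic := by monicity!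

lemma natDegree_X_sq_sub_one_pow (n : ℕ) : ((X ^ 2 - 1 : ℝ[X]) ^ n).natDegree = n + n := by
  have h : (X ^ 2 - 1 : ℝ[X]).natDegree = 2 := by compute_degree!
  rw [natDegree_pow, h, mul_two]

lemma natDegree_legendreP (n : ℕ) : (legendreP n).natDegree = n := by
  refine natDegree_eq_of_le_of_coeff_ne_zero ?_ ?_
  · rw [natDegree_le_iff_coeff_eq_zero]
    intro k hk
    rw [coeff_legendreP, coeff_eq_zero_of_natDegree_lt, mul_zero]
    rw [natDegree_X_sq_sub_one_pow]
    lia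
  · have hlead := (monic_X_sq_sub_one.pow n).coeff_natDegree
    rw [natDegree_X_sq_sub_one_pow] at hlead
    have hchoose := Nat.choose_pos (Nat.le_add_left n n)
    rw [coeff_legendreP, hlead]
    positivity

lemma degree_legendreP (n : ℕ) : (legendreP n).degree = n := by
  have h : legendreP n ≠ 0 := fun h0 => by
    simpa [h0] using eval_legendreP (one_pow 2) n
  rw [degree_eq_natDegree h, natDegree_legendreP]

lemma abs_coeff_legendreP_le {n k : ℕ} (hk : k ≤ n) : |(legendreP n).coeff k| ≤ 4 ^ n := by
  have hchoose : ((k + n).choose n : ℝ) ≤ 4 ^ n := by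
    have h : (k + n).choose n ≤ 2 ^ (n + n) :=
      (Nat.choose_le_two_pow _ _).trans (Nat.pow_le_pow_right two_pos (by lia))
    rw [← two_mul, pow_mul] at h
    exact_mod_cast h
  rw [coeff_legendreP, abs_mul, abs_of_nonneg (by positivity)]
  calc _ ≤ 1 / 2 ^ n * (4 : ℝ) ^ n * 2 ^ n := by
        gcongr
        exact abs_coeff_X_sq_sub_one_pow_le n (k + n)
    _ = 4 ^ n := by field_simp

lemma sum_abs_coeff_legendreP_le (n : ℕ) :
    ∑ k ∈ Finset.range (n + 1), |(legendreP n).coeff k| ≤ 8 ^ n := by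
  calc _ ≤ ∑ _k ∈ Finset.range (n + 1), (4 : ℝ) ^ n :=
        Finset.sum_le_sum fun k hk => abs_coeff_legendreP_le (Finset.mem_range_succ_iff.mp hk)
    _ = ((n + 1 : ℕ) : ℝ) * 4 ^ n := by simp
    _ ≤ 2 ^ n * 4 ^ n := by
        gcongr
        exact_mod_cast n.lt_two_pow_self
    _ = 8 ^ n := by rw [← mul_pow]; norm_num

lemma abs_eval_legendreP_le (n : ℕ) {t : ℝ} (ht : |t| ≤ 1) : |(legendreP n).eval t| ≤ 8 ^ n := by
  rw [eval_eq_sum_range, natDegree_legendreP]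
  refine (Finset.abs_sum_le_sum_abs _ _).trans
    ((Finset.sum_le_sum fun k _ => ?_).trans (sum_abs_coeff_legendreP_le n))
  rw [abs_mul, abs_pow]
  exact mul_le_of_le_one_right (abs_nonneg _) (pow_le_one₀ (abs_nonneg t) ht)

lemma polyIntegral_mul_legendreP_of_degree_lt {p : ℝ[X]} {n : ℕ} (hp : p.degree < n) :
    polyIntegral (p * legendreP n) = 0 := by
  rw [legendreP, mul_smul_comm, map_smul, polyIntegral_mul_iterate_derivative
    (fun _ => eval_iterate_derivative_X_sq_sub_one_pow_of_lt (by norm_num))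
    (fun _ => eval_iterate_derivative_X_sq_sub_one_pow_of_lt (by norm_num)),
    iterate_derivative_eq_zero_of_degree_lt hp]
  simp

lemma polyIntegral_legendreP_mul_legendreP_of_ne {m n : ℕ} (h : m ≠ n) :
    polyIntegral (legendreP m * legendreP n) = 0 := by
  rcases h.lt_or_gt with h | h
  · exact polyIntegral_mul_legendreP_of_degree_lt (by rw [degree_legendreP]; exact_mod_cast h)
  · rw [mul_comm]
    exact polyIntegral_mul_legendreP_of_degree_lt (by rw [degree_legendreP]; exact_mod_cast h)

lemma degree_X_mul_derivative_sub_smul_lt {R : Type*} [CommRing R] {p : R[X]} {n : ℕ}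
    (hp : p.natDegree ≤ n) : (X * derivative p - (n : R) • p).degree < (n : WithBot ℕ) := by
  rw [degree_lt_iff_coeff_zero]
  intro m hm
  have hcoeff : (X * derivative p).coeff m = m * p.coeff m := by
    cases m with
    | zero => simp
    | succ m => rw [coeff_X_mul, coeff_derivative]; push_cast; ring
  rw [coeff_sub, hcoeff, coeff_smul, smul_eq_mul]
  rcases hm.eq_or_lt with rfl | hm
  · exact sub_self _
  · simp [coeff_eq_zero_of_natDegree_lt (hp.trans_lt hm)]

-- Evaluate `∫ (x Pₙ²)'` both by the boundary values `Pₙ(±1) = (±1)ⁿ` and by the product rule,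
-- where `x Pₙ'` may be replaced by `n Pₙ` because their difference has degree `< n`.
lemma polyIntegral_legendreP_mul_self (n : ℕ) :
    polyIntegral (legendreP n * legendreP n) = 2 / (2 * n + 1) := by
  set P := legendreP n
  have hboundary : polyIntegral (derivative (X * (P * P))) = 2 := by
    simp only [polyIntegral_derivative, eval_mul, eval_X, P, eval_legendreP (one_pow 2),
      eval_legendreP neg_one_sq, ← mul_pow]
    norm_num
  have hproduct : derivative (X * (P * P)) = P * P + (2 : ℝ) • (X * derivative P * P) := by
    simp only [derivative_mul, derivative_X, ofNat_smul_eq_nsmul]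
    ring
  have horth : polyIntegral (X * derivative P * P) = n * polyIntegral (P * P) := by
    have h := polyIntegral_mul_legendreP_of_degree_lt
      (degree_X_mul_derivative_sub_smul_lt (natDegree_legendreP n).le)
    rwa [sub_mul, map_sub, smul_mul_assoc, map_smul, smul_eq_mul, sub_eq_zero] at h
  rw [hproduct, map_add, map_smul, smul_eq_mul, horth] at hboundary
  rw [eq_div_iff (by positivity)]
  linarith

/-- The Legendre polynomials as a `Polynomial.Sequence`, the form in which Mathlib provides that
`P₀, …, Pₖ₋₁` span the polynomials of degree less than `k`. -/
def legendreSequence : Polynomial.Sequence ℝ := ⟨legendreP, degree_legendreP⟩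

lemma sum_polyIntegral_smul_legendreP {p : ℝ[X]} {k : ℕ} (hp : p.degree < k) :
    ∑ n ∈ Finset.range k, ((2 * n + 1) / 2 * polyIntegral (p * legendreP n)) • legendreP n = p := by
  let expansion : ℝ[X] →ₗ[ℝ] ℝ[X] := ∑ n ∈ Finset.range k,
    (((2 * n + 1) / 2 : ℝ) • polyIntegral ∘ₗ LinearMap.mulRight ℝ (legendreP n)).smulRight
      (legendreP n)
  have hexpansion (p : ℝ[X]) : expansion p = ∑ n ∈ Finset.range k,
      ((2 * n + 1) / 2 * polyIntegral (p * legendreP n)) • legendreP n := by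
    simp [expansion, LinearMap.sum_apply]
  have hlegendre : Set.EqOn expansion (LinearMap.id : ℝ[X] →ₗ[ℝ] ℝ[X])
      (legendreSequence '' Set.Iio k) := by
    rintro _ ⟨m, hm, rfl⟩
    change expansion (legendreP m) = legendreP m
    rw [hexpansion, Finset.sum_eq_single_of_mem m (Finset.mem_range.mpr hm) fun n _ hn => by
      rw [polyIntegral_legendreP_mul_legendreP_of_ne hn.symm, mul_zero, zero_smul],
      polyIntegral_legendreP_mul_self, div_mul_div_comm, mul_comm, div_self (by positivity),
      one_smul]
  have hspan : p ∈ Submodule.span ℝ (legendreSequence '' Set.Iio k) := by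
    rw [legendreSequence.span_degreeLT fun n _ =>
      (leadingCoeff_ne_zero.mpr (legendreSequence.ne_zero n)).isUnit]
    exact mem_degreeLT.mpr hp
  rw [← hexpansion]
  exact LinearMap.eqOn_span hlegendre hspan

end Legendre

section Moments

open Polynomial

variable {E : Type*} [NormedAddCommGroup E] [NormedSpace ℝ E]

/-- The linear map on polynomials with moments `γ`, sending `X ^ k` to `γ k`. -/
def momentFunctional (γ : ℕ → E) : ℝ[X] →ₗ[ℝ] E :=
  Polynomial.lsum fun k => LinearMap.toSpanSingleton ℝ E (γ k)

lemma momentFunctional_X_pow (γ : ℕ → E) (k : ℕ) : momentFunctional γ (X ^ k) = γ k := by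
  simp [momentFunctional, lsum_apply, X_pow_eq_monomial, sum_monomial_index]

lemma momentFunctional_legendreP (γ : ℕ → E) (n : ℕ) :
    momentFunctional γ (legendreP n) =
      ∑ k ∈ Finset.range (n + 1), (legendreP n).coeff k • γ k := by
  simp only [momentFunctional, lsum_apply, LinearMap.toSpanSingleton_apply]
  exact sum_over_range' _ (by simp) _ (by simp [natDegree_legendreP])

lemma norm_momentFunctional_legendreP_le {γ : ℕ → E} {C M : ℝ} (hM : 1 ≤ M)
    (hγ : ∀ k, ‖γ k‖ ≤ C * M ^ k) (n : ℕ) :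
    ‖momentFunctional γ (legendreP n)‖ ≤ C * (8 * M) ^ n := by
  have hC : 0 ≤ C := by simpa using (norm_nonneg _).trans (hγ 0)
  rw [momentFunctional_legendreP]
  calc _ ≤ ∑ k ∈ Finset.range (n + 1), |(legendreP n).coeff k| * (C * M ^ n) := by
        refine norm_sum_le_of_le _ fun k hk => ?_
        rw [norm_smul, Real.norm_eq_abs]
        have hkn := Finset.mem_range_succ_iff.mp hk
        have := hγ k
        grw [this, hkn]
    _ ≤ 8 ^ n * (C * M ^ n) := by
        rw [← Finset.sum_mul]
        gcongr
        exact sum_abs_coeff_legendreP_le n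
    _ = C * (8 * M) ^ n := by ring

/-- The `k`-th moment `∫₋₁¹ tᵏ Pₙ(t) dt` of the `n`-th Legendre polynomial. -/
def legendreMoment (k n : ℕ) : ℝ := polyIntegral (X ^ k * legendreP n)

lemma legendreMoment_of_lt {k n : ℕ} (h : k < n) : legendreMoment k n = 0 :=
  polyIntegral_mul_legendreP_of_degree_lt (by rw [degree_X_pow]; exact_mod_cast h)

lemma abs_legendreMoment_le (k n : ℕ) : |legendreMoment k n| ≤ 2 * 8 ^ n := by
  have h : ∀ t ∈ Set.uIoc (-1 : ℝ) 1, ‖(X ^ k * legendreP n).eval t‖ ≤ 8 ^ n := fun t ht => by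
    rw [Set.uIoc_of_le (by norm_num)] at ht
    have ht' : |t| ≤ 1 := abs_le.mpr ⟨ht.1.le, ht.2⟩
    rw [eval_mul, eval_X_pow, norm_mul, norm_pow]
    exact (mul_le_of_le_one_left (norm_nonneg _) (pow_le_one₀ (norm_nonneg t) ht')).trans
      (abs_eval_legendreP_le n ht')
  refine (intervalIntegral.norm_integral_le_of_norm_le_const h).trans_eq ?_
  norm_num
  ring

/-- The coefficients `(2n+1)/2 · γ(Pₙ)` of a Neumann series, where `γ(Pₙ)` is `Pₙ` with each power
`tᵏ` replaced by `γ k`; the `βₙ(x)` arise from `γ k = φₖ(x)/xᵏ - 1`. -/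
def neumannCoeff (γ : ℕ → ℂ) (n : ℕ) : ℂ :=
  (2 * n + 1) / 2 * momentFunctional γ (legendreP n)

lemma norm_neumannCoeff_le {γ : ℕ → ℂ} {C M : ℝ} (hM : 1 ≤ M) (hγ : ∀ k, ‖γ k‖ ≤ C * M ^ k)
    (n : ℕ) : ‖neumannCoeff γ n‖ ≤ C * (16 * M) ^ n := by
  have hn : (2 * n + 1 : ℝ) / 2 ≤ 2 ^ n := by
    have h : ((n + 1 : ℕ) : ℝ) ≤ 2 ^ n := by exact_mod_cast n.lt_two_pow_self
    push_cast at h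
    linarith
  have hnorm : ‖(2 * n + 1 : ℂ) / 2‖ = (2 * n + 1 : ℝ) / 2 := by
    rw [← Complex.norm_of_nonneg (show (0 : ℝ) ≤ (2 * n + 1) / 2 by positivity)]
    push_cast
    rfl
  rw [neumannCoeff, norm_mul, hnorm]
  calc _ ≤ 2 ^ n * (C * (8 * M) ^ n) := by
        gcongr
        exact norm_momentFunctional_legendreP_le hM hγ n
    _ = C * (16 * M) ^ n := by
        rw [mul_left_comm, ← mul_pow, ← mul_assoc 2]
        norm_num

lemma sum_neumannCoeff_mul_legendreMoment (γ : ℕ → ℂ) (k : ℕ) :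
    ∑ n ∈ Finset.range (k + 1), neumannCoeff γ n * legendreMoment k n = γ k := by
  have hdegree : (X ^ k : ℝ[X]).degree < ((k + 1 : ℕ) : WithBot ℕ) := by
    rw [degree_X_pow]
    exact_mod_cast k.lt_succ_self
  have h := congrArg (momentFunctional γ) (sum_polyIntegral_smul_legendreP hdegree)
  rw [momentFunctional_X_pow, map_sum] at h
  rw [← h]
  refine Finset.sum_congr rfl fun n _ => ?_
  rw [map_smul, real_smul, neumannCoeff, legendreMoment]
  push_cast
  ring

lemma betaCoef_eq_neumannCoeff (f : ℝ → ℂ) (n : ℕ) (x : ℝ) :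
    betaCoef f n x = neumannCoeff (fun k => formalPower f k x / (x : ℂ) ^ k - 1) n := by
  have hone : ∑ k ∈ Finset.range (n + 1), ((legendreP n).coeff k : ℂ) = 1 := by
    have h := eval_legendreP (one_pow 2) n
    rw [eval_eq_sum_range, natDegree_legendreP] at h
    simpa using congrArg ((↑) : ℝ → ℂ) h
  simp only [betaCoef, neumannCoeff, momentFunctional_legendreP, real_smul, mul_sub, mul_one,
    Finset.sum_sub_distrib, hone, mul_div_assoc]

end Moments

section NeumannSeries

/-- The integral `∫₋₁¹ Pₙ(s) exp(zs) ds`, which at `z = iζ` is `2 iⁿ jₙ(ζ)` with `jₙ` the spherical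
Bessel function. -/
def legendreFourier (n : ℕ) (z : ℂ) : ℂ :=
  ∫ s in (-1 : ℝ)..1, (((legendreP n).eval s : ℝ) : ℂ) * Complex.exp (z * s)

lemma hasSum_legendreFourier (n : ℕ) (z : ℂ) :
    HasSum (fun k : ℕ => z ^ k / (k.factorial : ℂ) * (legendreMoment k n : ℂ))
      (legendreFourier n z) := by
  have hterm (k : ℕ) : z ^ k / (k.factorial : ℂ) * (legendreMoment k n : ℂ) =
      ∫ s in (-1 : ℝ)..1,
        (((legendreP n).eval s : ℝ) : ℂ) * ((z * s) ^ k / (k.factorial : ℂ)) := by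
    rw [legendreMoment, polyIntegral_apply, ← intervalIntegral.integral_ofReal,
      ← intervalIntegral.integral_const_mul]
    refine intervalIntegral.integral_congr fun s _ => ?_
    simp only [Polynomial.eval_mul, Polynomial.eval_pow, Polynomial.eval_X]
    push_cast
    ring
  have hP : Continuous fun s : ℝ => (((legendreP n).eval s : ℝ) : ℂ) :=
    Complex.continuous_ofReal.comp (legendreP n).continuous
  simp_rw [hterm]
  refine intervalIntegral.hasSum_integral_of_dominated_convergence
    (fun k _ => 8 ^ n * (‖z‖ ^ k / k.factorial))
    (fun k => (hP.mul (by fun_prop)).aestronglyMeasurable)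
    (fun k => Eventually.of_forall fun t ht => ?_)
    (Eventually.of_forall fun t _ => (Real.summable_pow_div_factorial ‖z‖).mul_left _)
    intervalIntegrable_const
    (Eventually.of_forall fun t _ => HasSum.mul_left _ ?_)
  · rw [Set.uIoc_of_le (by norm_num)] at ht
    have ht' : |t| ≤ 1 := abs_le.mpr ⟨ht.1.le, ht.2⟩
    rw [norm_mul, norm_div, norm_pow, norm_mul, norm_real, norm_real, norm_natCast,
      Real.norm_eq_abs, Real.norm_eq_abs]
    gcongr
    · exact abs_eval_legendreP_le n ht'
    · exact mul_le_of_le_one_right (norm_nonneg _) ht'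
  · rw [Complex.exp_eq_exp_ℂ]
    exact NormedSpace.expSeries_div_hasSum_exp (z * t)

variable {γ : ℕ → ℂ} {C M : ℝ}

-- The moment vanishes for `k < n`, so growth in `n` may be traded for growth in `k`, with a factor
-- `2⁻ⁿ` to spare.
lemma norm_neumannCoeff_mul_legendreMoment_le (hM : 1 ≤ M) (hγ : ∀ k, ‖γ k‖ ≤ C * M ^ k)
    (n k : ℕ) :
    ‖neumannCoeff γ n * legendreMoment k n‖ ≤ 2 * C * (1 / 2) ^ n * (256 * M) ^ k := by
  have hC : 0 ≤ C := by simpa using (norm_nonneg _).trans (hγ 0)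
  rcases lt_or_ge k n with hkn | hnk
  · rw [legendreMoment_of_lt hkn, ofReal_zero, mul_zero, norm_zero]
    positivity
  · rw [norm_mul, norm_real, Real.norm_eq_abs]
    calc _ ≤ C * (16 * M) ^ n * (2 * 8 ^ n) :=
          mul_le_mul (norm_neumannCoeff_le hM hγ n) (abs_legendreMoment_le k n) (abs_nonneg _)
            (by positivity)
      _ = 2 * C * ((1 / 2) * (256 * M)) ^ n := by
          rw [mul_mul_mul_comm, ← mul_pow, mul_comm C]
          ring_nf
      _ ≤ 2 * C * (1 / 2) ^ n * (256 * M) ^ k := by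
          rw [mul_pow, ← mul_assoc]
          gcongr
          linarith

lemma norm_neumann_summand_le (hM : 1 ≤ M) (hγ : ∀ k, ‖γ k‖ ≤ C * M ^ k) (z : ℂ) (n k : ℕ) :
    ‖z ^ k / (k.factorial : ℂ) * (neumannCoeff γ n * legendreMoment k n)‖ ≤
      2 * C * (1 / 2) ^ n * ((256 * M * ‖z‖) ^ k / k.factorial) := by
  rw [norm_mul, norm_div, norm_pow, norm_natCast]
  calc _ ≤ ‖z‖ ^ k / k.factorial * (2 * C * (1 / 2) ^ n * (256 * M) ^ k) := by
        gcongr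
        exact norm_neumannCoeff_mul_legendreMoment_le hM hγ n k
    _ = _ := by ring

lemma hasSum_neumann_row (γ : ℕ → ℂ) (z : ℂ) (n : ℕ) :
    HasSum (fun k : ℕ => z ^ k / (k.factorial : ℂ) * (neumannCoeff γ n * legendreMoment k n))
      (neumannCoeff γ n * legendreFourier n z) := by
  simpa only [mul_left_comm] using (hasSum_legendreFourier n z).mul_left (neumannCoeff γ n)

lemma hasSum_neumann_column (γ : ℕ → ℂ) (z : ℂ) (k : ℕ) :
    HasSum (fun n : ℕ => z ^ k / (k.factorial : ℂ) * (neumannCoeff γ n * legendreMoment k n))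
      (z ^ k / (k.factorial : ℂ) * γ k) := by
  rw [← sum_neumannCoeff_mul_legendreMoment γ k]
  refine (hasSum_sum_of_ne_finset_zero fun n hn => ?_).mul_left _
  rw [legendreMoment_of_lt (Nat.lt_of_succ_le (not_lt.mp (mt Finset.mem_range.mpr hn))),
    ofReal_zero, mul_zero]

lemma norm_neumannCoeff_mul_legendreFourier_le (hM : 1 ≤ M) (hγ : ∀ k, ‖γ k‖ ≤ C * M ^ k) (z : ℂ)
    (n : ℕ) :
    ‖neumannCoeff γ n * legendreFourier n z‖ ≤
      2 * C * (1 / 2) ^ n * Real.exp (256 * M * ‖z‖) := by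
  have hexp : HasSum (fun k : ℕ => (256 * M * ‖z‖) ^ k / k.factorial)
      (Real.exp (256 * M * ‖z‖)) := by
    rw [Real.exp_eq_exp_ℝ]
    exact NormedSpace.expSeries_div_hasSum_exp (256 * M * ‖z‖)
  rw [← (hasSum_neumann_row γ z n).tsum_eq]
  exact tsum_of_norm_bounded (hexp.mul_left _) (norm_neumann_summand_le hM hγ z n)

-- Both sides are iterated sums of one absolutely convergent double series.
lemma hasSum_neumannCoeff_mul_legendreFourier (hM : 1 ≤ M) (hγ : ∀ k, ‖γ k‖ ≤ C * M ^ k)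
    {z S : ℂ} (hS : HasSum (fun k : ℕ => z ^ k / (k.factorial : ℂ) * γ k) S) :
    HasSum (fun n => neumannCoeff γ n * legendreFourier n z) S := by
  have hC : 0 ≤ C := by simpa using (norm_nonneg _).trans (hγ 0)
  have hbound : Summable fun p : ℕ × ℕ =>
      2 * C * (1 / 2) ^ p.1 * ((256 * M * ‖z‖) ^ p.2 / p.2.factorial) :=
    (summable_geometric_two.mul_left (2 * C)).mul_of_nonneg
      (Real.summable_pow_div_factorial (256 * M * ‖z‖))
      (fun n => by positivity) (fun k => by positivity)
  have hdouble := (Summable.of_norm_bounded hbound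
    fun p => norm_neumann_summand_le hM hγ z p.1 p.2).hasSum
  have hrows := hdouble.prod_fiberwise (hasSum_neumann_row γ z)
  have hcolumns := ((Equiv.prodComm ℕ ℕ).hasSum_iff.mpr hdouble).prod_fiberwise
    (hasSum_neumann_column γ z)
  rwa [← hS.unique hcolumns] at hrows

lemma hasSum_div_pow_sub_one {φ : ℕ → ℂ} {x z S : ℂ}
    (hS : HasSum (fun k : ℕ => z ^ k / (k.factorial : ℂ) * φ k) S) (hx : x ≠ 0) :
    HasSum (fun k : ℕ => (z * x) ^ k / (k.factorial : ℂ) * (φ k / x ^ k - 1))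
      (S - Complex.exp (z * x)) := by
  rw [Complex.exp_eq_exp_ℂ]
  refine (hS.sub (NormedSpace.expSeries_div_hasSum_exp (z * x))).congr_fun fun k => ?_
  rw [mul_pow]
  field_simp

lemma tendstoUniformlyOn_neumannSeries {X : Type*} {s : Set X} {γ : X → ℕ → ℂ} {z S : X → ℂ}
    {r : ℝ} (hM : 1 ≤ M) (hγ : ∀ x ∈ s, ∀ k, ‖γ x k‖ ≤ C * M ^ k) (hz : ∀ x ∈ s, ‖z x‖ ≤ r)
    (hS : ∀ x ∈ s, HasSum (fun k : ℕ => z x ^ k / (k.factorial : ℂ) * γ x k) (S x)) :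
    TendstoUniformlyOn
      (fun N x => ∑ n ∈ Finset.range N, neumannCoeff (γ x) n * legendreFourier n (z x))
      S atTop s := by
  have hmajorant : Summable fun n : ℕ => 2 * C * (1 / 2) ^ n * Real.exp (256 * M * r) :=
    (summable_geometric_two.mul_left (2 * C)).mul_right _
  refine (tendstoUniformlyOn_tsum_nat hmajorant fun n x hx => ?_).congr_right fun x hx =>
    (hasSum_neumannCoeff_mul_legendreFourier hM (hγ x hx) (hS x hx)).tsum_eq
  have hC : 0 ≤ C := by simpa using (norm_nonneg _).trans (hγ x hx 0)
  refine (norm_neumannCoeff_mul_legendreFourier_le hM (hγ x hx) (z x) n).trans ?_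
  gcongr
  exact hz x hx

end NeumannSeries

section AlternatingIntegral

variable {A : Type*} [NormedRing A] [NormedAlgebra ℝ A]

/-- The iterated integral from `0` whose weights alternate between `p` (outermost) and `q`. The
first components of the Peano–Baker series of the system `g' = h p`, `h' = g q` with
`g(0) = h(0) = 1` are the sums of these. -/
def alternatingIntegral : ℕ → (ℝ → A) → (ℝ → A) → ℝ → A
  | 0, _, _ => fun _ => 1
  | k + 1, p, q => fun x => ∫ s in (0 : ℝ)..x, alternatingIntegral k q p s * p s

variable {p q : ℝ → A} {b M : ℝ}

lemma continuousOn_integral_Icc {E : Type*} [NormedAddCommGroup E] [NormedSpace ℝ E] {F : ℝ → E}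
    {a b : ℝ} (hF : ContinuousOn F (Set.Icc a b)) :
    ContinuousOn (fun x => ∫ s in a..x, F s) (Set.Icc a b) := by
  rcases le_or_gt a b with hab | hab
  · have h := intervalIntegral.continuousOn_primitive_interval' (μ := volume)
      (hF.intervalIntegrable_of_Icc hab) Set.left_mem_uIcc
    rwa [Set.uIcc_of_le hab] at h
  · simp [Set.Icc_eq_empty_of_lt hab]

lemma continuousOn_alternatingIntegral (hp : ContinuousOn p (Set.Icc 0 b))
    (hq : ContinuousOn q (Set.Icc 0 b)) (k : ℕ) :
    ContinuousOn (alternatingIntegral k p q) (Set.Icc 0 b) := by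
  induction k generalizing p q with
  | zero => exact continuousOn_const
  | succ k ih => exact continuousOn_integral_Icc ((ih hq hp).mul hp)

lemma norm_integral_mul_le {u : ℝ → A} {D x : ℝ} {n : ℕ} (hx : 0 ≤ x)
    (hu : ∀ s ∈ Set.Icc 0 x, ‖u s‖ ≤ D * ((M * s) ^ n / n.factorial))
    (hp : ∀ s ∈ Set.Icc 0 x, ‖p s‖ ≤ M) :
    ‖∫ s in (0 : ℝ)..x, u s * p s‖ ≤ D * ((M * x) ^ (n + 1) / (n + 1).factorial) := by
  have hpointwise : ∀ s ∈ Set.Ioc 0 x, ‖u s * p s‖ ≤ D * M ^ (n + 1) / n.factorial * s ^ n := by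
    intro s hs
    have hs' := Set.Ioc_subset_Icc_self hs
    calc ‖u s * p s‖ ≤ D * ((M * s) ^ n / n.factorial) * M :=
          (norm_mul_le _ _).trans (mul_le_mul (hu s hs') (hp s hs') (norm_nonneg _)
            ((norm_nonneg _).trans (hu s hs')))
      _ = D * M ^ (n + 1) / n.factorial * s ^ n := by ring
  calc _ ≤ ∫ s in (0 : ℝ)..x, D * M ^ (n + 1) / n.factorial * s ^ n :=
        intervalIntegral.norm_integral_le_of_norm_le hx (Eventually.of_forall hpointwise)
          (Continuous.intervalIntegrable (by fun_prop) _ _)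
    _ = D * ((M * x) ^ (n + 1) / (n + 1).factorial) := by
        rw [intervalIntegral.integral_const_mul, integral_pow, zero_pow n.succ_ne_zero, sub_zero,
          Nat.factorial_succ]
        push_cast
        rw [mul_pow]
        field_simp

lemma norm_alternatingIntegral_le [NormOneClass A] {x : ℝ} (hx : 0 ≤ x)
    (hp : ∀ s ∈ Set.Icc 0 x, ‖p s‖ ≤ M) (hq : ∀ s ∈ Set.Icc 0 x, ‖q s‖ ≤ M) (k : ℕ) :
    ‖alternatingIntegral k p q x‖ ≤ (M * x) ^ k / k.factorial := by
  induction k generalizing p q x with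
  | zero => simp [alternatingIntegral]
  | succ k ih =>
    rw [← one_mul ((M * x) ^ (k + 1) / _)]
    refine norm_integral_mul_le hx (fun s hs => ?_) hp
    have hsub : Set.Icc 0 s ⊆ Set.Icc 0 x := Set.Icc_subset_Icc_right hs.2
    rw [one_mul]
    exact ih hs.1 (fun t ht => hq t (hsub ht)) fun t ht => hp t (hsub ht)

lemma sum_alternatingIntegral_succ (hp : ContinuousOn p (Set.Icc 0 b))
    (hq : ContinuousOn q (Set.Icc 0 b)) {x : ℝ} (hx : x ∈ Set.Icc 0 b) (N : ℕ) :
    ∑ k ∈ Finset.range (N + 1), alternatingIntegral k p q x =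
      1 + ∫ s in (0 : ℝ)..x, (∑ k ∈ Finset.range N, alternatingIntegral k q p s) * p s := by
  have hintegrable : ∀ k ∈ Finset.range N,
      IntervalIntegrable (fun s => alternatingIntegral k q p s * p s) volume 0 x := fun k _ =>
    (((continuousOn_alternatingIntegral hq hp k).mul hp).mono
      (Set.Icc_subset_Icc_right hx.2)).intervalIntegrable_of_Icc hx.1
  simp_rw [Finset.sum_mul]
  rw [Finset.sum_range_succ', intervalIntegral.integral_finsetSum hintegrable, add_comm]
  rfl

lemma norm_sub_sum_alternatingIntegral_le {g h : ℝ → A} {D : ℝ}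
    (hp : ContinuousOn p (Set.Icc 0 b)) (hq : ContinuousOn q (Set.Icc 0 b))
    (hpM : ∀ s ∈ Set.Icc 0 b, ‖p s‖ ≤ M) (hqM : ∀ s ∈ Set.Icc 0 b, ‖q s‖ ≤ M)
    (hg : ContinuousOn g (Set.Icc 0 b)) (hh : ContinuousOn h (Set.Icc 0 b))
    (hgD : ∀ s ∈ Set.Icc 0 b, ‖g s‖ ≤ D) (hhD : ∀ s ∈ Set.Icc 0 b, ‖h s‖ ≤ D)
    (hgh : ∀ x ∈ Set.Icc 0 b, g x = 1 + ∫ s in (0 : ℝ)..x, h s * p s)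
    (hhg : ∀ x ∈ Set.Icc 0 b, h x = 1 + ∫ s in (0 : ℝ)..x, g s * q s)
    {x : ℝ} (hx : x ∈ Set.Icc 0 b) (N : ℕ) :
    ‖g x - ∑ k ∈ Finset.range N, alternatingIntegral k p q x‖ ≤
      D * ((M * x) ^ N / N.factorial) := by
  induction N generalizing p q g h x with
  | zero => simpa using hgD x hx
  | succ N ih =>
    have hsub : Set.Icc 0 x ⊆ Set.Icc 0 b := Set.Icc_subset_Icc_right hx.2
    have hsum : ContinuousOn (fun s => ∑ k ∈ Finset.range N, alternatingIntegral k q p s)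
        (Set.Icc 0 b) :=
      continuousOn_finsetSum _ fun k _ => continuousOn_alternatingIntegral hq hp k
    have hintegrable {u : ℝ → A} (hu : ContinuousOn u (Set.Icc 0 b)) :
        IntervalIntegrable (fun s => u s * p s) volume 0 x :=
      ((hu.mul hp).mono hsub).intervalIntegrable_of_Icc hx.1
    rw [hgh x hx, sum_alternatingIntegral_succ hp hq hx, add_sub_add_left_eq_sub,
      ← intervalIntegral.integral_sub (hintegrable hh) (hintegrable hsum)]
    simp_rw [← sub_mul]
    exact norm_integral_mul_le hx.1
      (fun s hs => ih hq hp hqM hpM hh hg hhD hgD hhg hgh (hsub hs)) fun s hs => hpM s (hsub hs)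

lemma hasSum_alternatingIntegral [NormOneClass A] [CompleteSpace A] {g h : ℝ → A}
    (hp : ContinuousOn p (Set.Icc 0 b)) (hq : ContinuousOn q (Set.Icc 0 b))
    (hg : ContinuousOn g (Set.Icc 0 b)) (hh : ContinuousOn h (Set.Icc 0 b))
    (hgh : ∀ x ∈ Set.Icc 0 b, g x = 1 + ∫ s in (0 : ℝ)..x, h s * p s)
    (hhg : ∀ x ∈ Set.Icc 0 b, h x = 1 + ∫ s in (0 : ℝ)..x, g s * q s)
    {x : ℝ} (hx : x ∈ Set.Icc 0 b) :
    HasSum (fun k => alternatingIntegral k p q x) (g x) := by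
  obtain ⟨M, hM⟩ := isCompact_Icc.exists_bound_of_continuousOn (hp.prodMk hq)
  obtain ⟨D, hD⟩ := isCompact_Icc.exists_bound_of_continuousOn (hg.prodMk hh)
  have hsub : Set.Icc 0 x ⊆ Set.Icc 0 b := Set.Icc_subset_Icc_right hx.2
  have hpM : ∀ s ∈ Set.Icc 0 b, ‖p s‖ ≤ M := fun s hs => (norm_fst_le _).trans (hM s hs)
  have hqM : ∀ s ∈ Set.Icc 0 b, ‖q s‖ ≤ M := fun s hs => (norm_snd_le _).trans (hM s hs)
  have hgD : ∀ s ∈ Set.Icc 0 b, ‖g s‖ ≤ D := fun s hs => (norm_fst_le _).trans (hD s hs)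
  have hhD : ∀ s ∈ Set.Icc 0 b, ‖h s‖ ≤ D := fun s hs => (norm_snd_le _).trans (hD s hs)
  have hsummable : Summable fun k => ‖alternatingIntegral k p q x‖ :=
    (Real.summable_pow_div_factorial (M * x)).of_nonneg_of_le (fun _ => norm_nonneg _)
      (norm_alternatingIntegral_le hx.1 (fun s hs => hpM s (hsub hs))
        fun s hs => hqM s (hsub hs))
  have hremainder : Tendsto (fun N : ℕ => D * ((M * x) ^ N / N.factorial)) atTop (𝓝 0) := by
    simpa using (FloorSemiring.tendsto_pow_div_factorial_atTop (M * x)).const_mul D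
  rw [hasSum_iff_tendsto_nat_of_summable_norm hsummable, tendsto_iff_norm_sub_tendsto_zero]
  refine squeeze_zero (fun _ => norm_nonneg _) (fun N => ?_) hremainder
  rw [norm_sub_rev]
  exact norm_sub_sum_alternatingIntegral_le hp hq hpM hqM hg hh hgD hhD hgh hhg hx N

lemma alternatingIntegral_smul (z : ℂ) (p q : ℝ → ℂ) (k : ℕ) (x : ℝ) :
    alternatingIntegral k (z • p) (z • q) x = z ^ k * alternatingIntegral k p q x := by
  induction k generalizing p q x with
  | zero => simp [alternatingIntegral]
  | succ k ih =>
    simp only [alternatingIntegral, ih, Pi.smul_apply, smul_eq_mul]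
    rw [← intervalIntegral.integral_const_mul]
    congr 1 with s
    ring

lemma eq_factorial_mul_alternatingIntegral {u w : ℕ → ℝ → ℂ} (hw : ∀ n, w (n + 2) = w n)
    (hzero : ∀ x, u 0 x = 1)
    (hsucc : ∀ n x, u (n + 1) x = (n + 1) * ∫ s in (0 : ℝ)..x, u n s * w (n + 1) s) (n : ℕ)
    (x : ℝ) : u n x = n.factorial * alternatingIntegral n (w n) (w (n + 1)) x := by
  induction n generalizing x with
  | zero => simp [hzero, alternatingIntegral]
  | succ n ih =>
    simp only [hsucc, ih, mul_assoc, intervalIntegral.integral_const_mul, alternatingIntegral, hw,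
      Nat.factorial_succ]
    push_cast
    ring

lemma formalPower_eq (f : ℝ → ℂ) (k : ℕ) (x : ℝ) :
    formalPower f k x = k.factorial * (f x * alternatingIntegral k (f ^ 2)⁻¹ (f ^ 2) x) := by
  let w : ℕ → ℝ → ℂ := fun n => (f ^ 2) ^ ((-1 : ℤ) ^ n)
  have hw (n : ℕ) : w (n + 2) = w n := by simp only [w, pow_add, neg_one_sq, mul_one]
  have hX : formalX f k x = k.factorial * alternatingIntegral k (w k) (w (k + 1)) x :=
    eq_factorial_mul_alternatingIntegral hw (fun _ => rfl) (fun _ _ => rfl) k x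
  have hXt : formalXt f k x = k.factorial * alternatingIntegral k (w (k + 1)) (w k) x := by
    rw [← hw k]
    exact eq_factorial_mul_alternatingIntegral (w := fun n => w (n + 1)) (fun n => hw (n + 1))
      (fun _ => rfl) (fun n x => by simp only [hw]; rfl) k x
  rw [formalPower]
  split_ifs with hk
  · simp only [hX, w, hk.neg_one_pow, hk.add_one.neg_one_pow, zpow_neg_one, zpow_one]
    ring
  · rw [Nat.not_odd_iff_even] at hk
    simp only [hXt, w, hk.neg_one_pow, hk.add_one.neg_one_pow, zpow_neg_one, zpow_one]
    ring

lemma norm_formalPower_div_pow_le {f : ℝ → ℂ} {C x : ℝ} (hx : 0 < x) (hf : ‖f x‖ ≤ C)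
    (hsq : ∀ s ∈ Set.Icc 0 x, ‖f s ^ 2‖ ≤ M) (hinv : ∀ s ∈ Set.Icc 0 x, ‖(f s ^ 2)⁻¹‖ ≤ M)
    (k : ℕ) : ‖formalPower f k x / (x : ℂ) ^ k‖ ≤ C * M ^ k := by
  rw [formalPower_eq, norm_div, norm_mul, norm_mul, norm_natCast, norm_pow,
    Complex.norm_of_nonneg hx.le, div_le_iff₀ (by positivity)]
  calc _ ≤ k.factorial * (C * ((M * x) ^ k / k.factorial)) := by
        gcongr
        · exact (norm_nonneg _).trans hf
        · exact norm_alternatingIntegral_le hx.le hinv hsq k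
    _ = C * M ^ k * x ^ k := by
        rw [mul_left_comm, mul_div_cancel₀ _ (by positivity), mul_pow, mul_assoc]

lemma exists_norm_formalPower_div_pow_sub_one_le {f : ℝ → ℂ} (hf : ContinuousOn f (Set.Icc 0 b))
    (hfne : ∀ x ∈ Set.Icc 0 b, f x ≠ 0) :
    ∃ C M : ℝ, 1 ≤ M ∧
      ∀ x ∈ Set.Ioc 0 b, ∀ k, ‖formalPower f k x / (x : ℂ) ^ k - 1‖ ≤ C * M ^ k := by
  have hsq : ContinuousOn (fun s => f s ^ 2) (Set.Icc 0 b) := hf.pow 2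
  have hinv : ContinuousOn (fun s => (f s ^ 2)⁻¹) (Set.Icc 0 b) :=
    hsq.inv₀ fun s hs => pow_ne_zero 2 (hfne s hs)
  obtain ⟨C, hC⟩ := isCompact_Icc.exists_bound_of_continuousOn hf
  obtain ⟨M, hM⟩ := isCompact_Icc.exists_bound_of_continuousOn (hsq.prodMk hinv)
  refine ⟨C + 1, max 1 M, le_max_left _ _, fun x hx k => ?_⟩
  have hsub : Set.Icc 0 x ⊆ Set.Icc 0 b := Set.Icc_subset_Icc_right hx.2
  have hMx : ∀ s ∈ Set.Icc 0 x, ‖(f s ^ 2, (f s ^ 2)⁻¹)‖ ≤ max 1 M := fun s hs =>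
    (hM s (hsub hs)).trans (le_max_right _ _)
  have hpower := norm_formalPower_div_pow_le hx.1 (hC x (Set.Ioc_subset_Icc_self hx))
    (fun s hs => (norm_fst_le _).trans (hMx s hs)) (fun s hs => (norm_snd_le _).trans (hMx s hs)) k
  have hone : 1 ≤ max 1 M ^ k := one_le_pow₀ (le_max_left _ _)
  refine (norm_sub_le _ _).trans ?_
  rw [norm_one, add_mul, one_mul]
  exact add_le_add hpower hone

end AlternatingIntegral

section Schrodinger

lemma eq_add_integral_of_hasDerivWithinAt {E : Type*} [NormedAddCommGroup E] [NormedSpace ℝ E]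
    [CompleteSpace E] {F F' : ℝ → E} {a b x : ℝ}
    (hF : ∀ t ∈ Set.Icc a b, HasDerivWithinAt F (F' t) (Set.Icc a b) t)
    (hF' : ContinuousOn F' (Set.Icc a b)) (hx : x ∈ Set.Icc a b) :
    F x = F a + ∫ s in a..x, F' s := by
  have hsub : Set.Icc a x ⊆ Set.Icc a b := Set.Icc_subset_Icc_right hx.2
  rw [intervalIntegral.integral_eq_sub_of_hasDerivAt_of_le hx.1
    (fun t ht => ((hF t (hsub ht)).mono hsub).continuousWithinAt)
    (fun t ht => (hF t (hsub (Set.Ioo_subset_Icc_self ht))).hasDerivAt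
      (Icc_mem_nhds ht.1 (ht.2.trans_le hx.2)))
    ((hF'.mono hsub).intervalIntegrable_of_Icc hx.1), add_sub_cancel]

variable {f f' y y' q : ℝ → ℂ} {b : ℝ} {z : ℂ}

/-- `y` solves the Schrödinger equation `y'' = v y` on `s`, with derivative `y'`. Derivatives are
taken within `s`, hence are one-sided at the endpoints of an interval. -/
structure IsSchrodingerSolutionOn (v y y' : ℝ → ℂ) (s : Set ℝ) : Prop where
  hasDerivWithinAt : ∀ x ∈ s, HasDerivWithinAt y (y' x) s x
  hasDerivWithinAt' : ∀ x ∈ s, HasDerivWithinAt y' (v x * y x) s x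

lemma IsSchrodingerSolutionOn.continuousOn {v y y' : ℝ → ℂ} {s : Set ℝ}
    (hy : IsSchrodingerSolutionOn v y y' s) : ContinuousOn y s :=
  fun x hx => (hy.hasDerivWithinAt x hx).continuousWithinAt

lemma wronskian_eq_add_integral
    (hf : IsSchrodingerSolutionOn q f f' (Set.Icc 0 b))
    (hy : IsSchrodingerSolutionOn (fun x => q x + z ^ 2) y y' (Set.Icc 0 b))
    {x : ℝ} (hx : x ∈ Set.Icc 0 b) :
    f x * y' x - f' x * y x =
      f 0 * y' 0 - f' 0 * y 0 + ∫ s in (0 : ℝ)..x, z ^ 2 * (f s * y s) := by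
  refine eq_add_integral_of_hasDerivWithinAt (F := fun t => f t * y' t - f' t * y t)
    (fun t ht => ?_) ?_ hx
  · refine (((hf.hasDerivWithinAt t ht).mul (hy.hasDerivWithinAt' t ht)).sub
      ((hf.hasDerivWithinAt' t ht).mul (hy.hasDerivWithinAt t ht))).congr_deriv ?_
    ring
  · exact continuousOn_const.mul (hf.continuousOn.mul hy.continuousOn)

-- The second-order equation as a first-order system for `y / f` and `h`, where `z h` is the
-- Wronskian of `f` and `y`.
lemma exists_div_eq_one_add_integral
    (hf : IsSchrodingerSolutionOn q f f' (Set.Icc 0 b))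
    (hfne : ∀ x ∈ Set.Icc 0 b, f x ≠ 0)
    (hy : IsSchrodingerSolutionOn (fun x => q x + z ^ 2) y y' (Set.Icc 0 b))
    (hinit : y 0 = f 0) (hwronskian : f 0 * y' 0 - f' 0 * y 0 = z) :
    ∃ h : ℝ → ℂ, ContinuousOn h (Set.Icc 0 b) ∧
      (∀ x ∈ Set.Icc 0 b, (y / f) x = 1 + ∫ s in (0 : ℝ)..x, h s * (z • (f ^ 2)⁻¹) s) ∧
      ∀ x ∈ Set.Icc 0 b, h x = 1 + ∫ s in (0 : ℝ)..x, (y / f) s * (z • f ^ 2) s := by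
  let h : ℝ → ℂ := fun x => 1 + ∫ s in (0 : ℝ)..x, (y / f) s * (z • f ^ 2) s
  have hh : ContinuousOn h (Set.Icc 0 b) := continuousOn_const.add
    (continuousOn_integral_Icc ((hy.continuousOn.div hf.continuousOn hfne).mul
      ((hf.continuousOn.pow 2).const_smul z)))
  have hwronskian_eq : ∀ x ∈ Set.Icc 0 b, f x * y' x - f' x * y x = z * h x := by
    intro x hx
    rw [wronskian_eq_add_integral hf hy hx, hwronskian, mul_add, mul_one,
      ← intervalIntegral.integral_const_mul]
    congr 1
    refine intervalIntegral.integral_congr fun s hs => ?_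
    rw [Set.uIcc_of_le hx.1] at hs
    have hfs := hfne s ⟨hs.1, hs.2.trans hx.2⟩
    simp only [Pi.div_apply, Pi.smul_apply, Pi.pow_apply, smul_eq_mul]
    field_simp
  refine ⟨h, hh, fun x hx => ?_, fun _ _ => rfl⟩
  have hderiv : ∀ s ∈ Set.Icc 0 b,
      HasDerivWithinAt (y / f) (h s * (z • (f ^ 2)⁻¹) s) (Set.Icc 0 b) s := fun s hs => by
    refine ((hy.hasDerivWithinAt s hs).div (hf.hasDerivWithinAt s hs) (hfne s hs)).congr_deriv ?_
    simp only [Pi.smul_apply, Pi.inv_apply, Pi.pow_apply, smul_eq_mul]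
    rw [← mul_assoc, mul_comm (h s), ← hwronskian_eq s hs, div_eq_mul_inv]
    ring
  have hinv : ContinuousOn (f ^ 2)⁻¹ (Set.Icc 0 b) :=
    (hf.continuousOn.pow 2).inv₀ fun t ht => pow_ne_zero 2 (hfne t ht)
  rw [eq_add_integral_of_hasDerivWithinAt hderiv (hh.mul (hinv.const_smul z)) hx,
    Pi.div_apply, hinit, div_self (hfne 0 ⟨le_rfl, hx.1.trans hx.2⟩)]

lemma hasSum_formalPower
    (hf : IsSchrodingerSolutionOn q f f' (Set.Icc 0 b))
    (hfne : ∀ x ∈ Set.Icc 0 b, f x ≠ 0)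
    (hy : IsSchrodingerSolutionOn (fun x => q x + z ^ 2) y y' (Set.Icc 0 b))
    (hinit : y 0 = f 0) (hwronskian : f 0 * y' 0 - f' 0 * y 0 = z)
    {x : ℝ} (hx : x ∈ Set.Icc 0 b) :
    HasSum (fun k : ℕ => z ^ k / (k.factorial : ℂ) * formalPower f k x) (y x) := by
  have hsq : ContinuousOn (f ^ 2) (Set.Icc 0 b) := hf.continuousOn.pow 2
  have hinv : ContinuousOn (f ^ 2)⁻¹ (Set.Icc 0 b) :=
    hsq.inv₀ fun t ht => pow_ne_zero 2 (hfne t ht)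
  obtain ⟨h, hh, hgh, hhg⟩ :=
    exists_div_eq_one_add_integral hf hfne hy hinit hwronskian
  have hsum := (hasSum_alternatingIntegral (hinv.const_smul z) (hsq.const_smul z)
    (hy.continuousOn.div hf.continuousOn hfne) hh hgh hhg hx).mul_left (f x)
  rw [Pi.div_apply, mul_div_cancel₀ _ (hfne x hx)] at hsum
  refine hsum.congr_fun fun k => ?_
  have hfactorial : (k.factorial : ℂ) ≠ 0 := Nat.cast_ne_zero.mpr k.factorial_ne_zero
  rw [formalPower_eq, alternatingIntegral_smul]
  field_simp

end Schrodinger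

theorem solution_NSBF_representation_general {b : ℝ} {q f f' y y' : ℝ → ℂ} {w : ℂ}
    (hf : IsSchrodingerSolutionOn q f f' (Set.Icc 0 b))
    (hfne : ∀ x ∈ Set.Icc 0 b, f x ≠ 0)
    (hy : IsSchrodingerSolutionOn (fun x => q x - w ^ 2) y y' (Set.Icc 0 b))
    (hinit : y 0 = f 0) (hwronskian : f 0 * y' 0 - f' 0 * y 0 = Complex.I * w) :
    TendstoUniformlyOn
      (fun N : ℕ => fun x : ℝ => Complex.exp (Complex.I * w * x) +
        ∑ n ∈ Finset.range N, betaCoef f n x *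
          ∫ s in (-1 : ℝ)..1,
            (((legendreP n).eval s : ℝ) : ℂ) * Complex.exp (Complex.I * w * x * s))
      y atTop (Set.Ioc 0 b) := by
  have hsq : -w ^ 2 = (Complex.I * w) ^ 2 := by rw [mul_pow, I_sq, neg_one_mul]
  simp only [sub_eq_add_neg (q _), hsq] at hy
  obtain ⟨C, M, hM, hbound⟩ := exists_norm_formalPower_div_pow_sub_one_le hf.continuousOn hfne
  have hz : ∀ x ∈ Set.Ioc 0 b, ‖Complex.I * w * x‖ ≤ ‖w‖ * b := fun x hx => by
    rw [norm_mul, norm_mul, norm_I, one_mul, Complex.norm_of_nonneg hx.1.le]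
    gcongr
    exact hx.2
  have hseries : ∀ x ∈ Set.Ioc 0 b, HasSum (fun k : ℕ => (Complex.I * w * x) ^ k / k.factorial *
      (formalPower f k x / (x : ℂ) ^ k - 1)) (y x - Complex.exp (Complex.I * w * x)) :=
    fun x hx => hasSum_div_pow_sub_one (hasSum_formalPower hf hfne hy hinit hwronskian
      (Set.Ioc_subset_Icc_self hx)) (ofReal_ne_zero.mpr hx.1.ne')
  have hneumann := tendstoUniformlyOn_neumannSeries hM hbound hz hseries
  have hexp : TendstoUniformlyOn (fun (_ : ℕ) (x : ℝ) => Complex.exp (Complex.I * w * x))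
      (fun x => Complex.exp (Complex.I * w * x)) atTop (Set.Ioc 0 b) :=
    fun u hu => Eventually.of_forall fun _ _ _ => refl_mem_uniformity hu
  refine ((hexp.add hneumann).congr_right fun x _ => add_sub_cancel _ _).congr
    (Eventually.of_forall fun N x _ => ?_)
  simp only [Pi.add_apply, betaCoef_eq_neumannCoeff, legendreFourier]

/-- representation of the solution as a Neumann series of Bessel functions. -/
theorem solution_NSBF_representation
    (b : ℝ) (hb : 0 < b) (q : ℝ → ℂ) (hq : ContinuousOn q (Set.Icc (-b) b))
    (f f' : ℝ → ℂ)
    (hf : ∀ x ∈ Set.Icc (-b) b, HasDerivAt f (f' x) x)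
    (hf' : ∀ x ∈ Set.Icc (-b) b, HasDerivAt f' (q x * f x) x)
    (hf0 : f 0 = 1) (hf'0 : f' 0 = 0)
    (hfne : ∀ x ∈ Set.Icc (-b) b, f x ≠ 0)
    (w : ℂ) (y y' : ℝ → ℂ)
    (hy : ∀ x ∈ Set.Icc (-b) b, HasDerivAt y (y' x) x)
    (hy' : ∀ x ∈ Set.Icc (-b) b, HasDerivAt y' (q x * y x - w ^ 2 * y x) x)
    (hy0 : y 0 = 1) (hy'0 : y' 0 = Complex.I * w) :
    (∀ x ∈ Set.Ioc (0:ℝ) b,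
      Tendsto (fun N : ℕ => Complex.exp (Complex.I * w * x) +
          ∑ n ∈ Finset.range N, betaCoef f n x *
            ∫ s in (-1:ℝ)..1, (((legendreP n).eval s : ℝ) : ℂ) * Complex.exp (Complex.I * w * x * s))
        atTop (𝓝 (y x))) ∧
    ∀ Kc : Set ℝ, Kc ⊆ Set.Ioc (0:ℝ) b → IsCompact Kc →
      TendstoUniformlyOn
        (fun N : ℕ => fun x : ℝ => Complex.exp (Complex.I * w * x) +
          ∑ n ∈ Finset.range N, betaCoef f n x *
            ∫ s in (-1:ℝ)..1, (((legendreP n).eval s : ℝ) : ℂ) * Complex.exp (Complex.I * w * x * s))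
        y atTop Kc := by
  have hsub : Set.Icc 0 b ⊆ Set.Icc (-b) b := Set.Icc_subset_Icc_left (neg_nonpos.mpr hb.le)
  have hfsol : IsSchrodingerSolutionOn q f f' (Set.Icc 0 b) :=
    ⟨fun x hx => (hf x (hsub hx)).hasDerivWithinAt, fun x hx => (hf' x (hsub hx)).hasDerivWithinAt⟩
  have hysol : IsSchrodingerSolutionOn (fun x => q x - w ^ 2) y y' (Set.Icc 0 b) :=
    ⟨fun x hx => (hy x (hsub hx)).hasDerivWithinAt, fun x hx => by
      simpa only [sub_mul] using (hy' x (hsub hx)).hasDerivWithinAt⟩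
  have huniform := solution_NSBF_representation_general hfsol (fun x hx => hfne x (hsub hx)) hysol
    (hy0.trans hf0.symm) (by rw [hf0, hf'0, hy'0, one_mul, zero_mul, sub_zero])
  exact ⟨fun x hx => huniform.tendsto_at hx, fun K hK _ => huniform.mono hK⟩

end
end

section
/- Let b > 0, let q : ℝ → ℂ be continuous on [−b,b], let f solve f'' − q f = 0 on [−b,b] with f(0) = 1, f'(0) = 0, and assume f(x) ≠ 0 on [−b,b]. For ω ∈ ℂ let u(ω,·) be the solution of y'' − q(x)y = −ω² y with y(0) = 1, y'(0) = iω, and for N ∈ ℕ define the truncation u_N(ω,x) = e^{iωx} + Σ_{n=0}^{N} β_n(x) ∫_{−1}^{1} P_n(y) e^{iωxy} dy. Then there exist functions ε_N : (0,b] → [0,∞) with ε_N(x) → 0 as N → ∞ for every x ∈ (0,b], such that for all ω ∈ ℝ, all N ∈ ℕ und all x ∈ (0,b], |u(ω,x) − u_N(ω,x)| ≤ ε_N(x)·√(2x); in particular the error bound is independent of ω ∈ ℝ. -/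
open MeasureTheory Set Filter Finset Complex Topology

noncomputable section

/-!
If `y'' - q y = -ω² y`, `y(0) = 1`, `y'(0) = iω`, then `W(s, t) = y(s) e^{iωt}` solves the wave
equation `W_ss - W_tt = q(s) W` with `W(0, t) = e^{iωt}` and `(W_s - W_t)(0, t) = 0`. The same
Cauchy problem with polynomial data `p` is solved by substituting `φ_k(s)` for `X ^ k` in
`p(X + t)`, because `φ_k'' - q φ_k = k (k - 1) φ_{k - 2}`. In both cases integration along
characteristics bounds `W(x, 0) - W(0, x)` by the `L²(-x, x)` norm of the data, so on the dense
subspace of polynomials, and then everywhere, this difference is given by a bounded functional on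
`L²`; no transmutation kernel has to be constructed. The Neumann series is the Legendre expansion
of this functional, and the truncation error is the norm of a tail of its Riesz representer times
the `L²` norm of `e^{iωt}`, which for real `ω` does not depend on `ω`.
-/

section Legendre

open Polynomial

lemma integral_derivative_mul_of_eval_eq_zero {a b : ℝ} {p : ℝ[X]} (ha : p.eval a = 0)
    (hb : p.eval b = 0) (g : ℝ[X]) :
    ∫ s in a..b, (derivative p).eval s * g.eval s =
      -∫ s in a..b, p.eval s * (derivative g).eval s := by
  have parts := intervalIntegral.integral_deriv_mul_eq_sub (a := a) (b := b)
    (fun s _ => p.hasDerivAt s) (fun s _ => g.hasDerivAt s)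
    ((derivative p).continuous.intervalIntegrable a b)
    ((derivative g).continuous.intervalIntegrable a b)
  rw [intervalIntegral.integral_add (Continuous.intervalIntegrable (by fun_prop) a b)
    (Continuous.intervalIntegrable (by fun_prop) a b), ha, hb, zero_mul, zero_mul,
    sub_zero] at parts
  exact eq_neg_of_add_eq_zero_left parts

lemma integral_iterate_derivative_pow_mul_eq_zero {a b : ℝ} {w : ℝ[X]} (ha : w.eval a = 0)
    (hb : w.eval b = 0) {k n : ℕ} (hkn : k ≤ n) {g : ℝ[X]} (hg : g.degree < k) :
    ∫ s in a..b, (derivative^[k] (w ^ n)).eval s * g.eval s = 0 := by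
  replace hg : derivative^[k] g = 0 := iterate_derivative_eq_zero_of_degree_lt hg
  induction k generalizing g with
  | zero => simp_all
  | succ k ih =>
    have hw : w ∣ derivative^[k] (w ^ n) :=
      (dvd_pow_self w (by lia)).trans (pow_sub_dvd_iterate_derivative_of_pow_dvd k dvd_rfl)
    have hzero {c : ℝ} (hc : w.eval c = 0) : (derivative^[k] (w ^ n)).eval c = 0 :=
      eval_eq_zero_of_dvd_of_eval_eq_zero hw hc
    rw [Function.iterate_succ_apply', integral_derivative_mul_of_eval_eq_zero (hzero ha) (hzero hb),
      ih (by lia) (by rwa [← Function.iterate_succ_apply]), neg_zero]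

lemma eval_legendreP_of_sq_eq_one {c : ℝ} (hc : c ^ 2 = 1) (n : ℕ) :
    (legendreP n).eval c = c ^ n := by
  have factor : (X ^ 2 - 1 : ℝ[X]) = (X - C c) * (X + C c) := by
    rw [mul_comm, ← sq_sub_sq, ← C_pow, hc, C_1]
  have leibniz := aeval_iterate_derivative_self ((X ^ 2 - 1 : ℝ[X]) ^ n) n c
    (p' := (X + C c) ^ n) (by simp [factor, mul_pow])
  rw [coe_aeval_eq_eval] at leibniz
  rw [legendreP, eval_smul, leibniz, nsmul_eq_mul, smul_eq_mul, eval_pow, eval_add, eval_X, eval_C,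
    ← two_mul, mul_pow]
  field_simp

lemma coeff_legendreP_self_ne_zero (n : ℕ) : (legendreP n).coeff n ≠ 0 := by
  have monic : ((X ^ 2 - 1 : ℝ[X]) ^ n).Monic := (monic_X_pow_sub_C (1 : ℝ) two_ne_zero).pow n
  have degree : ((X ^ 2 - 1 : ℝ[X]) ^ n).natDegree = n + n := by
    rw [natDegree_pow, ← C_1, natDegree_X_pow_sub_C]; ring
  rw [legendreP, coeff_smul, coeff_iterate_derivative, ← degree, monic.coeff_natDegree, degree]
  have : (n + n).descFactorial n ≠ 0 := by simp [Nat.descFactorial_eq_zero_iff_lt]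
  simp [this, Nat.factorial_ne_zero]

lemma integral_legendreP_mul_eq_zero {n : ℕ} {g : ℝ[X]} (hg : g.degree < n) :
    ∫ s in (-1 : ℝ)..1, (legendreP n).eval s * g.eval s = 0 := by
  simp only [legendreP, eval_smul, smul_eq_mul, mul_assoc]
  rw [intervalIntegral.integral_const_mul,
    integral_iterate_derivative_pow_mul_eq_zero (by simp) (by simp) le_rfl hg, mul_zero]

lemma degree_X_mul_derivative_sub_natDegree_mul_lt (p : ℝ[X]) :
    (X * derivative p - C (p.natDegree : ℝ) * p).degree < (p.natDegree : WithBot ℕ) := by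
  rw [degree_lt_iff_coeff_zero]
  intro m hm
  have hcoeff : (X * derivative p).coeff m = m * p.coeff m := by
    cases m with
    | zero => simp
    | succ m => rw [coeff_X_mul, coeff_derivative]; push_cast; ring
  rcases hm.eq_or_lt with rfl | hlt
  · rw [coeff_sub, hcoeff, coeff_C_mul, sub_self]
  · rw [coeff_sub, hcoeff, coeff_C_mul, coeff_eq_zero_of_natDegree_lt hlt]; simp

lemma integral_legendreP_sq (n : ℕ) :
    ∫ s in (-1 : ℝ)..1, (legendreP n).eval s ^ 2 = 2 / (2 * n + 1) := by
  set P := legendreP n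
  -- `r` has lower degree than `P`, and `(X P²)' = (2 n + 1) P² + 2 P r`.
  set r := X * derivative P - C (n : ℝ) * P
  have hr : ∫ s in (-1 : ℝ)..1, P.eval s * r.eval s = 0 := by
    have := degree_X_mul_derivative_sub_natDegree_mul_lt P
    rw [natDegree_legendreP] at this
    exact integral_legendreP_mul_eq_zero this
  have hend {c : ℝ} (hc : c ^ 2 = 1) : P.eval c ^ 2 = 1 := by
    rw [eval_legendreP_of_sq_eq_one hc, pow_right_comm, hc, one_pow]
  have hd (s : ℝ) : HasDerivAt (fun s => s * P.eval s ^ 2)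
      ((2 * n + 1) * P.eval s ^ 2 + 2 * (P.eval s * r.eval s)) s := by
    refine ((hasDerivAt_id' s).mul ((P.hasDerivAt s).pow 2)).congr_deriv ?_
    simp [r]
    ring
  have ftc := intervalIntegral.integral_eq_sub_of_hasDerivAt (a := -1) (b := 1) (fun s _ => hd s)
    (Continuous.intervalIntegrable (by fun_prop) _ _)
  rw [intervalIntegral.integral_add (Continuous.intervalIntegrable (by fun_prop) _ _)
    (Continuous.intervalIntegrable (by fun_prop) _ _), intervalIntegral.integral_const_mul,
    intervalIntegral.integral_const_mul, hr, hend (one_pow 2),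
    hend neg_one_sq] at ftc
  rw [eq_div_iff (by positivity)]
  linarith

lemma integral_legendreP_mul_legendreP (m n : ℕ) :
    ∫ s in (-1 : ℝ)..1, (legendreP m).eval s * (legendreP n).eval s =
      if m = n then 2 / (2 * n + 1 : ℝ) else 0 := by
  rcases lt_trichotomy m n with h | rfl | h
  · simp only [mul_comm (eval _ (legendreP m)), if_neg h.ne]
    exact integral_legendreP_mul_eq_zero (by rw [degree_legendreP]; exact_mod_cast h)
  · simp only [← sq, integral_legendreP_sq, if_true]
  · rw [if_neg h.ne']
    exact integral_legendreP_mul_eq_zero (by rw [degree_legendreP]; exact_mod_cast h)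

end Legendre

section HilbertSpace

variable {𝕜 H : Type*} [RCLike 𝕜] [NormedAddCommGroup H] [InnerProductSpace 𝕜 H]

lemma exists_norm_apply_sub_sum_hilbertBasis_le [CompleteSpace H] (B : HilbertBasis ℕ 𝕜 H)
    (Λ : H →L[𝕜] 𝕜) :
    ∃ ε : ℕ → ℝ, (∀ N, 0 ≤ ε N) ∧ Tendsto ε atTop (𝓝 0) ∧ ∀ N v,
      ‖Λ v - ∑ n ∈ Finset.range N, Λ (B n) * inner 𝕜 (B n) v‖ ≤ ε N * ‖v‖ := by
  -- By Riesz, the errors are pairings of `v` with the tails of the expansion of `K`.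
  obtain ⟨K, rfl⟩ := (InnerProductSpace.toDual 𝕜 H).surjective Λ
  have htail := ((B.hasSum_repr K).tendsto_sum_nat.const_sub K).norm
  rw [sub_self, norm_zero] at htail
  refine ⟨_, fun N => norm_nonneg _, htail, fun N v => ?_⟩
  have herr : inner 𝕜 K v - ∑ n ∈ Finset.range N, inner 𝕜 K (B n) * inner 𝕜 (B n) v =
      inner 𝕜 (K - ∑ n ∈ Finset.range N, B.repr K n • B n) v := by
    simp only [inner_sub_left, sum_inner, inner_smul_left, B.repr_apply_apply, inner_conj_symm]
  simpa only [InnerProductSpace.toDual_apply_apply, herr] using norm_inner_le_norm _ v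

lemma exists_extension_eq_of_norm_sub_le {E : Type*} [AddCommGroup E] [Module 𝕜 E]
    {e : E →ₗ[𝕜] H} (he : DenseRange e) {L : E →ₗ[𝕜] 𝕜} (hL : ∃ C, ∀ p, ‖L p‖ ≤ C * ‖e p‖) :
    ∃ Λ : H →L[𝕜] 𝕜, ∀ v m, (∃ C, ∀ p, ‖m - L p‖ ≤ C * ‖v - e p‖) → Λ v = m := by
  refine ⟨L.extendOfNorm e, fun v m ⟨C, hC⟩ => ?_⟩
  have hbound : ∀ w, ‖m - L.extendOfNorm e w‖ ≤ C * ‖v - w‖ := fun w =>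
    he.induction_on w (isClosed_le (by fun_prop) (by fun_prop)) fun p => by
      simpa only [LinearMap.extendOfNorm_eq he hL] using hC p
  simpa [sub_eq_zero, eq_comm (a := m)] using hbound v

end HilbertSpace

section SquareIntegrable

open Polynomial
open scoped ComplexConjugate

lemma denseRange_aeval_continuousMap {𝕜 α : Type*} [RCLike 𝕜] [TopologicalSpace α] [CompactSpace α]
    {x : C(α, 𝕜)} (hx : IsSelfAdjoint x) (hinj : Function.Injective x) :
    DenseRange (aeval x : 𝕜[X] → C(α, 𝕜)) := by
  let A : StarSubalgebra 𝕜 C(α, 𝕜) :=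
    { (aeval x : 𝕜[X] →ₐ[𝕜] C(α, 𝕜)).range with
      star_mem' := by
        rintro _ ⟨p, rfl⟩
        refine ⟨p.map (starRingEnd 𝕜), ?_⟩
        ext t
        have hxt : starRingEnd 𝕜 (x t) = x t := DFunLike.congr_fun hx.star_eq t
        have := eval_map_apply (starRingEnd 𝕜) (x t) (p := p)
        simpa [hxt, aeval_continuousMap_apply] using this }
  have hA : A.SeparatesPoints := fun s t hst =>
    ⟨x, ⟨x, ⟨X, aeval_X x⟩, rfl⟩, hinj.ne hst⟩
  have hclosure := ContinuousMap.starSubalgebra_topologicalClosure_eq_top_of_separatesPoints A hA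
  exact dense_iff_closure_eq.2 (congrArg SetLike.coe hclosure)

attribute [local instance] Measure.Subtype.measureSpace

instance isFiniteMeasure_volume_Icc (a b : ℝ) :
    IsFiniteMeasure (volume : Measure (Set.Icc a b)) :=
  ⟨by simp [Measure.Subtype.volume_univ nullMeasurableSet_Icc]⟩

/-- The complex Hilbert space `L²(-1, 1)`. -/
abbrev L2Symm : Type := Lp ℂ 2 (volume : Measure (Set.Icc (-1 : ℝ) 1))

/-- The restriction of continuous functions on `ℝ` to `L²(-1, 1)`. -/
def toL2 : C(ℝ, ℂ) →ₗ[ℂ] L2Symm :=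
  (ContinuousMap.toLp 2 volume ℂ).toLinearMap ∘ₗ
    (ContinuousMap.compRightAlgHom ℂ ℂ (⟨(↑), continuous_subtype_val⟩ : C(Set.Icc (-1 : ℝ) 1, ℝ)))

lemma toL2_apply (F : C(ℝ, ℂ)) :
    toL2 F = ContinuousMap.toLp 2 volume ℂ (F.restrict (Set.Icc (-1) 1)) := rfl

lemma inner_toL2 (F G : C(ℝ, ℂ)) :
    inner ℂ (toL2 F) (toL2 G) = ∫ s in (-1 : ℝ)..1, G s * conj (F s) := by
  rw [toL2_apply, toL2_apply, ContinuousMap.inner_toLp,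
    intervalIntegral.integral_of_le (by norm_num), ← integral_Icc_eq_integral_Ioc,
    ← integral_subtype_comap measurableSet_Icc]
  rfl

lemma norm_toL2 (F : C(ℝ, ℂ)) : ‖toL2 F‖ = √(∫ s in (-1 : ℝ)..1, ‖F s‖ ^ 2) := by
  rw [@norm_eq_sqrt_re_inner ℂ, inner_toL2]
  simp_rw [Complex.mul_conj', ← ofReal_pow, intervalIntegral.integral_ofReal]
  rfl

lemma integral_norm_le_norm_toL2 (F : C(ℝ, ℂ)) : ∫ s in (-1 : ℝ)..1, ‖F s‖ ≤ √2 * ‖toL2 F‖ := by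
  set m := ∫ s in (-1 : ℝ)..1, ‖F s‖ with hm
  -- Cauchy–Schwarz, in the form `0 ≤ ∫ (‖F‖ - m / 2)²`.
  have hsq : 0 ≤ ∫ s in (-1 : ℝ)..1, (‖F s‖ - m / 2) ^ 2 :=
    intervalIntegral.integral_nonneg (by norm_num) fun s _ => sq_nonneg _
  have hexpand : ∫ s in (-1 : ℝ)..1, (‖F s‖ - m / 2) ^ 2 =
      (∫ s in (-1 : ℝ)..1, ‖F s‖ ^ 2) - m ^ 2 / 2 := by
    simp_rw [sub_sq]
    rw [intervalIntegral.integral_add (Continuous.intervalIntegrable (by fun_prop) _ _)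
      (Continuous.intervalIntegrable (by fun_prop) _ _), intervalIntegral.integral_sub
      (Continuous.intervalIntegrable (by fun_prop) _ _)
      (Continuous.intervalIntegrable (by fun_prop) _ _), intervalIntegral.integral_mul_const,
      intervalIntegral.integral_const_mul, intervalIntegral.integral_const, ← hm]
    norm_num
    ring
  rw [norm_toL2, ← Real.sqrt_mul two_pos.le]
  exact Real.le_sqrt_of_sq_le (by linarith)

/-- The embedding of complex polynomials into `L²(-1, 1)`. -/
def polyToL2 : ℂ[X] →ₗ[ℂ] L2Symm :=
  toL2 ∘ₗ (aeval (ofRealCLM : C(ℝ, ℂ))).toLinearMap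

lemma denseRange_polyToL2 : DenseRange polyToL2 := by
  let coord : C(Set.Icc (-1 : ℝ) 1, ℂ) := ⟨fun t => ((t : ℝ) : ℂ), by fun_prop⟩
  have hcoord : IsSelfAdjoint coord := by ext t; simp [coord]
  have hinj : Function.Injective coord := fun s t hst => Subtype.ext (ofReal_injective hst)
  have hpoly : ⇑polyToL2 = ContinuousMap.toLp 2 volume ℂ ∘ aeval coord := by
    funext p
    refine congrArg (ContinuousMap.toLp 2 volume ℂ) ?_
    ext t
    simp [coord, aeval_continuousMap_apply]
  rw [DenseRange, hpoly]
  exact (ContinuousMap.toLp_denseRange ℂ volume ℂ (by norm_num)).comp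
    (denseRange_aeval_continuousMap hcoord hinj) (ContinuousMap.toLp 2 volume ℂ).continuous

/-- The Legendre polynomials with complex coefficients, normalised in `L²(-1, 1)`. -/
def normalizedLegendre (n : ℕ) : ℂ[X] :=
  C (√((2 * n + 1) / 2) : ℂ) * (legendreP n).map (algebraMap ℝ ℂ)

lemma aeval_normalizedLegendre (n : ℕ) (s : ℝ) :
    aeval (ofRealCLM : C(ℝ, ℂ)) (normalizedLegendre n) s =
      ((√((2 * n + 1) / 2) * (legendreP n).eval s : ℝ) : ℂ) := by
  rw [aeval_continuousMap_apply, normalizedLegendre, eval_C_mul, ofReal_mul]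
  exact congrArg _ (eval_map_apply (algebraMap ℝ ℂ) s)

lemma inner_polyToL2_normalizedLegendre (n : ℕ) (F : C(ℝ, ℂ)) :
    inner ℂ (polyToL2 (normalizedLegendre n)) (toL2 F) =
      √((2 * n + 1) / 2) * ∫ s in (-1 : ℝ)..1, (((legendreP n).eval s : ℝ) : ℂ) * F s := by
  rw [polyToL2, LinearMap.comp_apply, inner_toL2, ← intervalIntegral.integral_const_mul]
  refine intervalIntegral.integral_congr fun s _ => ?_
  rw [AlgHom.toLinearMap_apply, aeval_normalizedLegendre, conj_ofReal, ofReal_mul]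
  ring

lemma orthonormal_polyToL2_normalizedLegendre :
    Orthonormal ℂ fun n => polyToL2 (normalizedLegendre n) := by
  rw [orthonormal_iff_ite]
  intro m n
  have hint := inner_polyToL2_normalizedLegendre m
    (aeval (ofRealCLM : C(ℝ, ℂ)) (normalizedLegendre n))
  simp_rw [aeval_normalizedLegendre, ← ofReal_mul, intervalIntegral.integral_ofReal,
    mul_left_comm (eval _ _), intervalIntegral.integral_const_mul,
    integral_legendreP_mul_legendreP, ← ofReal_mul] at hint
  refine hint.trans ?_
  split_ifs with h
  · rw [h, ← mul_assoc, Real.mul_self_sqrt (by positivity)]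
    rw [div_mul_div_comm, mul_comm, div_self (by positivity), ofReal_one]
  · simp

lemma span_range_normalizedLegendre :
    Submodule.span ℂ (Set.range normalizedLegendre) = ⊤ := by
  let S : Polynomial.Sequence ℂ :=
    { elems' := normalizedLegendre
      degree_eq' := fun n => by
        have : ((√((2 * n + 1) / 2) : ℝ) : ℂ) ≠ 0 := ofReal_ne_zero.2 (by positivity)
        rw [normalizedLegendre, degree_C_mul this, degree_map, degree_legendreP] }
  exact S.span fun n => (leadingCoeff_ne_zero.2 (S.ne_zero n)).isUnit

/-- The Hilbert basis of `L²(-1, 1)` formed by the normalised Legendre polynomials. -/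
def legendreBasis : HilbertBasis ℕ ℂ L2Symm :=
  HilbertBasis.mk orthonormal_polyToL2_normalizedLegendre <| by
    rw [Set.range_comp' polyToL2 normalizedLegendre, Submodule.span_image,
      span_range_normalizedLegendre, Submodule.map_top]
    exact fun v _ => denseRange_polyToL2 v

lemma legendreBasis_apply (n : ℕ) : legendreBasis n = polyToL2 (normalizedLegendre n) := by
  simp [legendreBasis]

end SquareIntegrable

section FormalPowers

variable {f f' q : ℝ → ℂ} {b x : ℝ}

lemma hasDerivWithinAt_integral_Icc {E : Type*} [NormedAddCommGroup E] [NormedSpace ℝ E]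
    [CompleteSpace E] {g : ℝ → E} {a b x : ℝ} (hg : ContinuousOn g (Set.Icc a b))
    (hx : x ∈ Set.Icc a b) :
    HasDerivWithinAt (fun r => ∫ s in a..r, g s) (g x) (Set.Icc a b) x := by
  have : Fact (x ∈ Set.Icc a b) := ⟨hx⟩
  refine intervalIntegral.integral_hasDerivWithinAt_right ?_
    (hg.stronglyMeasurableAtFilter_nhdsWithin measurableSet_Icc x) (hg x hx)
  exact (hg.mono (Set.Icc_subset_Icc_right hx.2)).intervalIntegrable_of_Icc hx.1

lemma formalX_inv (f : ℝ → ℂ) (k : ℕ) : formalX f⁻¹ k = formalXt f k := by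
  induction k with
  | zero => rfl
  | succ k ih =>
    have hflip (z : ℂ) : (z⁻¹ ^ 2) ^ (-1 : ℤ) ^ (k + 1) = (z ^ 2) ^ (-1 : ℤ) ^ k := by
      rw [inv_pow, inv_zpow', pow_succ (-1 : ℤ), mul_neg_one, neg_neg]
    simp only [formalX, formalXt, ih, Pi.inv_apply, hflip]

lemma formalXt_inv (f : ℝ → ℂ) (k : ℕ) : formalXt f⁻¹ k = formalX f k := by
  rw [← formalX_inv, inv_inv]

lemma formalPower_zero (f : ℝ → ℂ) : formalPower f 0 = f := by
  ext x
  simp [formalPower, formalXt]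

lemma formalPower_succ (f : ℝ → ℂ) (k : ℕ) (x : ℝ) :
    formalPower f (k + 1) x =
      f x * ((k + 1) * ∫ s in (0 : ℝ)..x, formalPower f⁻¹ k s * (f s)⁻¹) := by
  rcases Nat.even_or_odd k with hk | hk
  · rw [formalPower, if_pos hk.add_one, formalX]
    refine congrArg (fun I : ℂ => f x * ((k + 1) * I))
      (intervalIntegral.integral_congr fun s _ => ?_)
    simp only [formalPower, if_neg (Nat.not_odd_iff_even.2 hk), formalXt_inv,
      hk.add_one.neg_one_pow, zpow_neg_one, Pi.inv_apply]
    ring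
  · rw [formalPower, if_neg (Nat.not_odd_iff_even.2 hk.add_one), formalXt]
    refine congrArg (fun I : ℂ => f x * ((k + 1) * I))
      (intervalIntegral.integral_congr fun s _ => ?_)
    simp only [formalPower, if_pos hk, formalX_inv, hk.neg_one_pow, zpow_neg_one, Pi.inv_apply]
    ring

/-- The derivative of `formalPower f k`, given the derivative `f'` of `f`. -/
def formalPowerDeriv (f f' : ℝ → ℂ) (k : ℕ) (x : ℝ) : ℂ :=
  f' x / f x * formalPower f k x + k * formalPower f⁻¹ (k - 1) x

lemma continuousOn_formalPower (hf : ContinuousOn f (Set.Icc 0 b))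
    (hne : ∀ x ∈ Set.Icc 0 b, f x ≠ 0) (k : ℕ) :
    ContinuousOn (formalPower f k) (Set.Icc 0 b) := by
  induction k generalizing f with
  | zero => rwa [formalPower_zero]
  | succ k ih =>
    have hinv : ContinuousOn f⁻¹ (Set.Icc 0 b) := hf.inv₀ hne
    have hprim : ContinuousOn (fun r => ∫ s in (0 : ℝ)..r, formalPower f⁻¹ k s * (f s)⁻¹)
        (Set.Icc 0 b) := fun x hx => (hasDerivWithinAt_integral_Icc
      ((ih hinv fun x hx => inv_ne_zero (hne x hx)).mul hinv) hx).continuousWithinAt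
    rw [funext (formalPower_succ f k)]
    exact hf.mul (hprim.const_smul (k + 1 : ℂ))

lemma hasDerivWithinAt_formalPower
    (hf : ∀ x ∈ Set.Icc 0 b, HasDerivWithinAt f (f' x) (Set.Icc 0 b) x)
    (hne : ∀ x ∈ Set.Icc 0 b, f x ≠ 0) (k : ℕ) (hx : x ∈ Set.Icc 0 b) :
    HasDerivWithinAt (formalPower f k) (formalPowerDeriv f f' k x) (Set.Icc 0 b) x := by
  have hcont : ContinuousOn f (Set.Icc 0 b) := fun x hx => (hf x hx).continuousWithinAt
  cases k with
  | zero =>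
    rw [formalPower_zero]
    refine (hf x hx).congr_deriv ?_
    simp [formalPowerDeriv, formalPower_zero, div_mul_cancel₀ _ (hne x hx)]
  | succ k =>
    have hinv : ContinuousOn f⁻¹ (Set.Icc 0 b) := hcont.inv₀ hne
    have hprim : HasDerivWithinAt (fun r => ∫ s in (0 : ℝ)..r, formalPower f⁻¹ k s * (f s)⁻¹)
        (formalPower f⁻¹ k x * (f x)⁻¹) (Set.Icc 0 b) x := hasDerivWithinAt_integral_Icc
      ((continuousOn_formalPower hinv (fun x hx => inv_ne_zero (hne x hx)) k).mul hinv) hx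
    rw [funext (formalPower_succ f k)]
    refine ((hf x hx).mul (hprim.const_mul (k + 1 : ℂ))).congr_deriv ?_
    have := hne x hx
    simp only [formalPowerDeriv, formalPower_succ, Nat.add_sub_cancel]
    push_cast
    field_simp

lemma hasDerivWithinAt_formalPowerDeriv
    (hf : ∀ x ∈ Set.Icc 0 b, HasDerivWithinAt f (f' x) (Set.Icc 0 b) x)
    (hf' : ∀ x ∈ Set.Icc 0 b, HasDerivWithinAt f' (q x * f x) (Set.Icc 0 b) x)
    (hne : ∀ x ∈ Set.Icc 0 b, f x ≠ 0) (k : ℕ) (hx : x ∈ Set.Icc 0 b) :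
    HasDerivWithinAt (formalPowerDeriv f f' k)
      (q x * formalPower f k x + k * (k - 1 : ℕ) * formalPower f (k - 2) x) (Set.Icc 0 b) x := by
  have hdual := hasDerivWithinAt_formalPower (fun x hx => (hf x hx).inv (hne x hx))
    (fun x hx => inv_ne_zero (hne x hx)) (k - 1) hx
  refine ((((hf' x hx).div (hf x hx) (hne x hx)).mul
    (hasDerivWithinAt_formalPower hf hne k hx)).add (hdual.const_mul (k : ℂ))).congr_deriv ?_
  have := hne x hx
  simp only [formalPowerDeriv, inv_inv, Pi.inv_apply, Pi.div_apply, Nat.sub_sub]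
  field_simp
  ring

lemma formalPower_apply_zero (f : ℝ → ℂ) (k : ℕ) :
    formalPower f k 0 = if k = 0 then f 0 else 0 := by
  cases k <;> simp [formalPower_zero, formalPower_succ]

lemma formalPowerDeriv_apply_zero (hf0 : f 0 = 1) (hf'0 : f' 0 = 0) (k : ℕ) :
    formalPowerDeriv f f' k 0 = if k = 1 then 1 else 0 := by
  rcases k with _ | _ | k <;>
    simp [formalPowerDeriv, formalPower_apply_zero, hf0, hf'0]

end FormalPowers

section Umbral

open Polynomial

/-- The linear functional on polynomials that substitutes `φ k` for `X ^ k`. -/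
def umbralEval {R : Type*} [CommSemiring R] (φ : ℕ → R) : R[X] →ₗ[R] R :=
  lsum fun k => LinearMap.toSpanSingleton R R (φ k)

section Algebra

variable {R : Type*} [CommSemiring R] (φ : ℕ → R)

lemma umbralEval_eq_sum_range {p : R[X]} {N : ℕ} (hN : p.natDegree < N) :
    umbralEval φ p = ∑ k ∈ Finset.range N, p.coeff k * φ k :=
  sum_over_range' p (by simp) N hN

lemma umbralEval_monomial (n : ℕ) (a : R) : umbralEval φ (monomial n a) = a * φ n :=
  sum_monomial_index a _ (by simp)

lemma umbralEval_kronecker (m : ℕ) (p : R[X]) :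
    umbralEval (fun k => if k = m then 1 else 0) p = p.coeff m := by
  induction p using Polynomial.induction_on' with
  | add p q hp hq => rw [map_add, coeff_add, hp, hq]
  | monomial n a => simp [umbralEval_monomial, coeff_monomial]

lemma umbralEval_comp_C_mul_X (c : R) (p : R[X]) :
    umbralEval φ (p.comp (C c * X)) = umbralEval (fun k => c ^ k * φ k) p := by
  induction p using Polynomial.induction_on' with
  | add p q hp hq => rw [add_comp, map_add, map_add, hp, hq]
  | monomial n a =>
    rw [monomial_comp, mul_pow, ← C_pow, ← mul_assoc, ← C_mul, C_mul_X_pow_eq_monomial,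
      umbralEval_monomial, umbralEval_monomial, mul_assoc]

lemma umbralEval_of_second_difference {φ ψ : ℕ → R} {c : R}
    (h : ∀ k, ψ k = c * φ k + k * (k - 1 : ℕ) * φ (k - 2)) (p : R[X]) :
    umbralEval ψ p = c * umbralEval φ p + umbralEval φ (derivative (derivative p)) := by
  induction p using Polynomial.induction_on' with
  | add p q hp hq => simp only [map_add, hp, hq]; ring
  | monomial n a =>
    simp only [umbralEval_monomial, derivative_monomial, h, Nat.sub_sub]
    ring

lemma derivative_taylor (c : R) (p : R[X]) :
    derivative (taylor c p) = taylor c (derivative p) := by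
  simp [taylor_apply, derivative_comp]

lemma derivative_hasseDeriv (k : ℕ) (p : R[X]) :
    derivative (hasseDeriv k p) = hasseDeriv k (derivative p) := by
  rw [← hasseDeriv_one', ← hasseDeriv_one', ← LinearMap.comp_apply, ← LinearMap.comp_apply,
    hasseDeriv_comp, hasseDeriv_comp, add_comm, Nat.choose_symm_add]

lemma umbralEval_taylor {p : R[X]} {N : ℕ} (hN : p.natDegree < N) (c : R) :
    umbralEval φ (taylor c p) = ∑ k ∈ Finset.range N, (hasseDeriv k p).eval c * φ k := by
  simp only [umbralEval_eq_sum_range φ ((natDegree_taylor p c).trans_lt hN), taylor_coeff]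

end Algebra

variable {φ φ' : ℕ → ℝ → ℂ} {S : Set ℝ}

lemma hasDerivWithinAt_umbralEval_taylor {s : ℝ} (hφ : ∀ k, HasDerivWithinAt (φ k) (φ' k s) S s)
    (p : ℂ[X]) {τ : ℝ → ℂ} {v : ℂ} (hτ : HasDerivWithinAt τ v S s) :
    HasDerivWithinAt (fun r => umbralEval (φ · r) (taylor (τ r) p))
      (umbralEval (φ' · s) (taylor (τ s) p) +
        v * umbralEval (φ · s) (taylor (τ s) (derivative p))) S s := by
  have hN : p.natDegree < p.natDegree + 1 := Nat.lt_succ_self _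
  have hN' : (derivative p).natDegree < p.natDegree + 1 := by
    have := natDegree_derivative_le p; lia
  simp only [umbralEval_taylor _ hN, umbralEval_taylor _ hN', Finset.mul_sum]
  rw [← Finset.sum_add_distrib]
  refine HasDerivWithinAt.fun_sum fun k _ => ?_
  refine ((((hasseDeriv k p).hasDerivAt (τ s)).comp_hasDerivWithinAt s hτ).mul
    (hφ k)).congr_deriv ?_
  rw [derivative_hasseDeriv, Function.comp_apply]
  ring

lemma continuousOn_umbralEval_taylor (hφ : ∀ k, ContinuousOn (φ k) S) (p : ℂ[X]) :
    ContinuousOn (fun z : ℝ × ℝ => umbralEval (φ · z.1) (taylor (z.2 : ℂ) p))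
      (S ×ˢ Set.univ) := by
  simp only [umbralEval_taylor _ p.natDegree.lt_succ_self]
  refine continuousOn_finsetSum _ fun k _ => ContinuousOn.mul ?_ ?_
  · exact Continuous.continuousOn (by fun_prop)
  · exact (hφ k).comp continuousOn_fst fun z hz => hz.1

end Umbral

section Wave

lemma norm_image_sub_le_of_norm_derivWithin_le {E : Type*} [NormedAddCommGroup E]
    [NormedSpace ℝ E] {φ φ' : ℝ → E} {B B' : ℝ → ℝ} {a b s : ℝ}
    (hφ : ∀ r ∈ Set.Icc a b, HasDerivWithinAt φ (φ' r) (Set.Icc a b) r)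
    (hB : ∀ r, HasDerivAt B (B' r) r) (hle : ∀ r ∈ Set.Ico a b, ‖φ' r‖ ≤ B' r)
    (hs : s ∈ Set.Icc a b) : ‖φ s - φ a‖ ≤ B s - B a := by
  refine image_norm_le_of_norm_deriv_right_le_deriv_boundary (f := fun r => φ r - φ a)
    (B := fun r => B r - B a) (f' := φ')
    (fun r hr => ((hφ r hr).sub_const (φ a)).continuousWithinAt) (fun r hr => ?_) (by simp)
    (fun r => (hB r).sub_const (B a)) hle hs
  exact ((hφ r (Set.Ico_subset_Icc_self hr)).sub_const _).mono_of_mem_nhdsWithin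
    (Icc_mem_nhdsGE_of_mem hr)

/-- `W` solves the wave equation `W_ss - W_tt = q(s) W` for `s ∈ [0, b]` with Cauchy data
`W(0, t) = G t` and `(W_s - W_t)(0, t) = 0`. The equation is written as a first-order system for `W`
and `R = W_s - W_t`, along the characteristics `s + t = c` and `t - s = c`. -/
structure IsWaveSolution (b : ℝ) (q : ℝ → ℂ) (G : C(ℝ, ℂ)) (W R : ℝ → ℝ → ℂ) : Prop where
  continuousOn_right : ContinuousOn (fun z : ℝ × ℝ => R z.1 z.2) (Set.Icc 0 b ×ˢ Set.univ)
  apply_zero (t : ℝ) : W 0 t = G t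
  right_apply_zero (t : ℝ) : R 0 t = 0
  hasDerivWithinAt_left : ∀ s ∈ Set.Icc 0 b, ∀ c,
    HasDerivWithinAt (fun r => W r (c - r)) (R s (c - s)) (Set.Icc 0 b) s
  hasDerivWithinAt_right : ∀ s ∈ Set.Icc 0 b, ∀ c,
    HasDerivWithinAt (fun r => R r (c + r)) (q s * W s (c + s)) (Set.Icc 0 b) s

namespace IsWaveSolution

variable {b : ℝ} {q : ℝ → ℂ} {G G₁ G₂ : C(ℝ, ℂ)} {W R W₁ R₁ W₂ R₂ : ℝ → ℝ → ℂ}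

lemma sub (h₁ : IsWaveSolution b q G₁ W₁ R₁) (h₂ : IsWaveSolution b q G₂ W₂ R₂) :
    IsWaveSolution b q (G₁ - G₂) (W₁ - W₂) (R₁ - R₂) where
  continuousOn_right := h₁.continuousOn_right.sub h₂.continuousOn_right
  apply_zero t := by simp [h₁.apply_zero, h₂.apply_zero]
  right_apply_zero t := by simp [h₁.right_apply_zero, h₂.right_apply_zero]
  hasDerivWithinAt_left s hs c :=
    (h₁.hasDerivWithinAt_left s hs c).sub (h₂.hasDerivWithinAt_left s hs c)
  hasDerivWithinAt_right s hs c :=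
    ((h₁.hasDerivWithinAt_right s hs c).sub (h₂.hasDerivWithinAt_right s hs c)).congr_deriv
      (mul_sub _ _ _).symm

lemma norm_sub_le_of_norm_right_le (h : IsWaveSolution b q G W R) {B l : ℝ} (hl : 0 < l)
    (hB : 0 ≤ B)
    (hR : ∀ s ∈ Set.Icc 0 b, ∀ t, |t| ≤ b - s → ‖R s t‖ ≤ B * Real.exp (l * s))
    {s t : ℝ} (hs : s ∈ Set.Icc 0 b) (ht : |t| ≤ b - s) :
    ‖W s t - G (s + t)‖ ≤ B / l * Real.exp (l * s) := by
  have hsub : Set.Icc 0 s ⊆ Set.Icc 0 b := Set.Icc_subset_Icc_right hs.2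
  have hgrowth := norm_image_sub_le_of_norm_derivWithin_le (s := s)
    (B := fun r => B / l * Real.exp (l * r)) (B' := fun r => B * Real.exp (l * r))
    (fun r hr => (h.hasDerivWithinAt_left r (hsub hr) (s + t)).mono hsub)
    (fun r => (((hasDerivAt_id r).const_mul l).exp.const_mul (B / l)).congr_deriv <| by
      simp only [id]; field_simp)
    (fun r hr => hR r (hsub (Set.Ico_subset_Icc_self hr)) _ <| by
      rw [abs_le] at ht ⊢; constructor <;> linarith [hr.1, hr.2, ht.1, ht.2])
    ⟨hs.1, le_rfl⟩
  simp only [sub_zero, h.apply_zero, add_sub_cancel_left] at hgrowth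
  exact hgrowth.trans (sub_le_self _ (by positivity))

lemma integral_norm_characteristic_le (G : C(ℝ, ℂ)) {s t : ℝ} (hs : 0 ≤ s) (ht : |t| ≤ b - s) :
    ∫ r in (0 : ℝ)..s, ‖G (t - s + 2 * r)‖ ≤ (∫ r in -b..b, ‖G r‖) / 2 := by
  rw [abs_le] at ht
  rw [intervalIntegral.integral_comp_add_mul (fun r => ‖G r‖) two_ne_zero, smul_eq_mul,
    inv_mul_eq_div]
  gcongr
  exact intervalIntegral.integral_mono_interval (by linarith) (by linarith) (by linarith)
    (Eventually.of_forall fun r => norm_nonneg _) (Continuous.intervalIntegrable (by fun_prop) _ _)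

lemma norm_right_le_of_norm_sub_le (h : IsWaveSolution b q G W R) {A Q l : ℝ} (hl : 0 < l)
    (hA : 0 ≤ A) (hq : ∀ s ∈ Set.Icc 0 b, ‖q s‖ ≤ Q)
    (hW : ∀ s ∈ Set.Icc 0 b, ∀ t, |t| ≤ b - s → ‖W s t - G (s + t)‖ ≤ A * Real.exp (l * s))
    {s t : ℝ} (hs : s ∈ Set.Icc 0 b) (ht : |t| ≤ b - s) :
    ‖R s t‖ ≤ Q * ((∫ r in -b..b, ‖G r‖) / 2 + A / l * Real.exp (l * s)) := by
  have hQ : 0 ≤ Q := (norm_nonneg _).trans (hq s hs)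
  have hsub : Set.Icc 0 s ⊆ Set.Icc 0 b := Set.Icc_subset_Icc_right hs.2
  have hcont : Continuous fun r => ‖G (t - s + 2 * r)‖ := by fun_prop
  have hgrowth := norm_image_sub_le_of_norm_derivWithin_le (s := s)
    (B := fun r => Q * ((∫ σ in (0 : ℝ)..r, ‖G (t - s + 2 * σ)‖) + A / l * Real.exp (l * r)))
    (B' := fun r => Q * (‖G (t - s + 2 * r)‖ + A * Real.exp (l * r)))
    (fun r hr => (h.hasDerivWithinAt_right r (hsub hr) (t - s)).mono hsub)
    (fun r => ((hcont.integral_hasStrictDerivAt 0 r).hasDerivAt.add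
      (((hasDerivAt_id r).const_mul l).exp.const_mul (A / l))).const_mul Q |>.congr_deriv <| by
        simp only [id]; field_simp)
    (fun r hr => ?_) ⟨hs.1, le_rfl⟩
  · simp only [h.right_apply_zero, sub_zero, add_zero, sub_add_cancel] at hgrowth
    have hint := integral_norm_characteristic_le G hs.1 ht
    have hzero : 0 ≤ Q * (A / l * Real.exp (l * 0)) := by positivity
    rw [intervalIntegral.integral_same, zero_add] at hgrowth
    calc ‖R s t‖ ≤ _ := hgrowth
      _ ≤ Q * ((∫ r in (0 : ℝ)..s, ‖G (t - s + 2 * r)‖) + A / l * Real.exp (l * s)) :=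
        sub_le_self _ hzero
      _ ≤ _ := by gcongr
  · have hr' := hsub (Set.Ico_subset_Icc_self hr)
    have hWr := hW r hr' (t - s + r) <| by
      rw [abs_le] at ht ⊢; constructor <;> linarith [hr.1, hr.2, ht.1, ht.2]
    rw [show r + (t - s + r) = t - s + 2 * r by ring] at hWr
    rw [norm_mul]
    gcongr
    · exact hq r hr'
    · exact (norm_le_norm_add_norm_sub' _ _).trans (by gcongr)

lemma exists_forall_norm_right_le (h : IsWaveSolution b q G W R) (hb : 0 ≤ b) (l : ℝ) :
    ∃ s₀ ∈ Set.Icc 0 b, ∃ t₀, |t₀| ≤ b - s₀ ∧ ∀ s ∈ Set.Icc 0 b, ∀ t, |t| ≤ b - s →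
      ‖R s t‖ ≤ ‖R s₀ t₀‖ * Real.exp (-(l * s₀)) * Real.exp (l * s) := by
  let K : Set (ℝ × ℝ) := Set.Icc 0 b ×ˢ Set.Icc (-b) b ∩ {z | |z.2| ≤ b - z.1}
  have hK : IsCompact K := (isCompact_Icc.prod isCompact_Icc).inter_right
    (isClosed_le (by fun_prop) (by fun_prop))
  have hcont : ContinuousOn (fun z : ℝ × ℝ => ‖R z.1 z.2‖ * Real.exp (-(l * z.1))) K :=
    (h.continuousOn_right.mono fun z hz => ⟨hz.1.1, trivial⟩).norm.mul
      (Continuous.continuousOn (by fun_prop))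
  obtain ⟨⟨s₀, t₀⟩, hz₀, hmax⟩ := hK.exists_isMaxOn ⟨(0, 0), by simp [K, hb]⟩ hcont
  refine ⟨s₀, hz₀.1.1, t₀, hz₀.2, fun s hs t ht => ?_⟩
  have hmem : (s, t) ∈ K := ⟨⟨hs, abs_le.1 (ht.trans (sub_le_self b hs.1))⟩, ht⟩
  calc ‖R s t‖ = ‖R s t‖ * Real.exp (-(l * s)) * Real.exp (l * s) := by
        rw [mul_assoc, ← Real.exp_add, neg_add_cancel, Real.exp_zero, mul_one]
    _ ≤ _ := mul_le_mul_of_nonneg_right (hmax hmem) (Real.exp_pos _).le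

-- The weight `exp (-(Q + 1) s)` makes Picard iteration on the triangle `|t| ≤ b - s` a contraction.
theorem norm_sub_le (h : IsWaveSolution b q G W R) (hb : 0 ≤ b) {Q : ℝ}
    (hq : ∀ s ∈ Set.Icc 0 b, ‖q s‖ ≤ Q) :
    ‖W b 0 - G b‖ ≤ Real.exp ((Q + 1) * b) * ∫ r in -b..b, ‖G r‖ := by
  have hQ : 0 ≤ Q := (norm_nonneg _).trans (hq 0 ⟨le_rfl, hb⟩)
  have hl : 0 < Q + 1 := by linarith
  set M := ∫ r in -b..b, ‖G r‖
  have hM : 0 ≤ M := intervalIntegral.integral_nonneg (by linarith) fun r _ => norm_nonneg _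
  obtain ⟨s₀, hs₀, t₀, ht₀, hR⟩ := h.exists_forall_norm_right_le hb (Q + 1)
  set B := ‖R s₀ t₀‖ * Real.exp (-((Q + 1) * s₀)) with hBdef
  have hB : 0 ≤ B := by positivity
  have hW := fun s hs t ht => h.norm_sub_le_of_norm_right_le hl hB hR (s := s) (t := t) hs ht
  have hcontraction : B ≤ Q * (M / 2 + B / (Q + 1) / (Q + 1)) := by
    have hR₀ := h.norm_right_le_of_norm_sub_le hl (div_nonneg hB hl.le) hq hW hs₀ ht₀
    have hexp : Real.exp (-((Q + 1) * s₀)) ≤ 1 :=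
      Real.exp_le_one_iff.2 (neg_nonpos.2 (mul_nonneg hl.le hs₀.1))
    calc B ≤ Q * (M / 2 + B / (Q + 1) / (Q + 1) * Real.exp ((Q + 1) * s₀)) *
          Real.exp (-((Q + 1) * s₀)) := by rw [hBdef]; gcongr
      _ = Q * (M / 2 * Real.exp (-((Q + 1) * s₀)) + B / (Q + 1) / (Q + 1)) := by
        rw [Real.exp_neg]; field_simp
      _ ≤ Q * (M / 2 + B / (Q + 1) / (Q + 1)) := by
        gcongr; exact mul_le_of_le_one_right (by positivity) hexp
  have hBM : B ≤ (Q + 1) * M := by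
    have hhalf : Q * (B / (Q + 1) / (Q + 1)) ≤ B / 2 := by
      rw [div_div, ← mul_div_assoc, div_le_div_iff₀ (by positivity) two_pos]
      nlinarith [mul_nonneg hB (sq_nonneg Q)]
    nlinarith
  calc ‖W b 0 - G b‖ ≤ B / (Q + 1) * Real.exp ((Q + 1) * b) := by
        simpa using hW b ⟨hb, le_rfl⟩ 0 (by simp)
    _ ≤ M * Real.exp ((Q + 1) * b) := by
        gcongr; rwa [div_le_iff₀' hl]
    _ = _ := mul_comm _ _

end IsWaveSolution

end Wave

section WaveInstances

open Polynomial

variable {b : ℝ} {q : ℝ → ℂ}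

/-- The continuous function `t ↦ exp (iωt)`. -/
def expC (ω : ℂ) : C(ℝ, ℂ) := ⟨fun t => exp (I * ω * t), by fun_prop⟩

lemma isWaveSolution_exp {ω : ℂ} {y y' : ℝ → ℂ}
    (hy : ∀ s ∈ Set.Icc 0 b, HasDerivWithinAt y (y' s) (Set.Icc 0 b) s)
    (hy' : ∀ s ∈ Set.Icc 0 b,
      HasDerivWithinAt y' (q s * y s - ω ^ 2 * y s) (Set.Icc 0 b) s)
    (hy0 : y 0 = 1) (hy'0 : y' 0 = I * ω) :
    IsWaveSolution b q (expC ω) (fun s t => y s * expC ω t)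
      (fun s t => (y' s - I * ω * y s) * expC ω t) where
  continuousOn_right := by
    have hc : ContinuousOn (fun s => y' s - I * ω * y s) (Set.Icc 0 b) := fun s hs =>
      ((hy' s hs).sub ((hy s hs).const_mul (I * ω))).continuousWithinAt
    exact (hc.comp continuousOn_fst fun z hz => hz.1).mul (Continuous.continuousOn (by fun_prop))
  apply_zero t := by simp [hy0]
  right_apply_zero t := by simp [hy0, hy'0]
  hasDerivWithinAt_left s hs c := by
    have hexp := (((hasDerivAt_id (c - s)).ofReal_comp.const_mul (I * ω)).cexp.scomp s
      ((hasDerivAt_id s).const_sub c)).hasDerivWithinAt (s := Set.Icc 0 b)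
    refine ((hy s hs).mul hexp).congr_deriv ?_
    simp [expC]
    ring
  hasDerivWithinAt_right s hs c := by
    have hexp := (((hasDerivAt_id (c + s)).ofReal_comp.const_mul (I * ω)).cexp.scomp s
      ((hasDerivAt_id s).const_add c)).hasDerivWithinAt (s := Set.Icc 0 b)
    refine (((hy' s hs).sub ((hy s hs).const_mul (I * ω))).mul hexp).congr_deriv ?_
    simp [expC]
    linear_combination (-ω ^ 2 * y s * exp (I * ω * (c + s))) * I_sq

lemma isWaveSolution_umbralEval {φ φ' : ℕ → ℝ → ℂ}
    (hφ : ∀ k, ∀ s ∈ Set.Icc 0 b, HasDerivWithinAt (φ k) (φ' k s) (Set.Icc 0 b) s)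
    (hφ' : ∀ k, ∀ s ∈ Set.Icc 0 b, HasDerivWithinAt (φ' k)
      (q s * φ k s + k * (k - 1 : ℕ) * φ (k - 2) s) (Set.Icc 0 b) s)
    (hφ0 : ∀ k, φ k 0 = if k = 0 then 1 else 0) (hφ'0 : ∀ k, φ' k 0 = if k = 1 then 1 else 0)
    (p : ℂ[X]) :
    IsWaveSolution b q (aeval (ofRealCLM : C(ℝ, ℂ)) p)
      (fun s t => umbralEval (φ · s) (taylor (t : ℂ) p))
      (fun s t => umbralEval (φ' · s) (taylor (t : ℂ) p) -
        umbralEval (φ · s) (taylor (t : ℂ) (derivative p))) where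
  continuousOn_right := by
    have hc : ∀ k, ContinuousOn (φ k) (Set.Icc 0 b) := fun k s hs => (hφ k s hs).continuousWithinAt
    have hc' : ∀ k, ContinuousOn (φ' k) (Set.Icc 0 b) := fun k s hs =>
      (hφ' k s hs).continuousWithinAt
    exact (continuousOn_umbralEval_taylor hc' p).sub (continuousOn_umbralEval_taylor hc _)
  apply_zero t := by
    simp only [hφ0, umbralEval_kronecker, taylor_coeff_zero]
    rw [aeval_continuousMap_apply]
    rfl
  right_apply_zero t := by
    simp only [hφ0, hφ'0, umbralEval_kronecker, taylor_coeff_zero, taylor_coeff_one, sub_self]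
  hasDerivWithinAt_left s hs c := by
    have hc := ((hasDerivAt_id s).const_sub c).ofReal_comp.hasDerivWithinAt (s := Set.Icc 0 b)
    refine (hasDerivWithinAt_umbralEval_taylor (fun k => hφ k s hs) p hc).congr_deriv ?_
    simp [sub_eq_add_neg]
  hasDerivWithinAt_right s hs c := by
    have hc := ((hasDerivAt_id s).const_add c).ofReal_comp.hasDerivWithinAt (s := Set.Icc 0 b)
    refine ((hasDerivWithinAt_umbralEval_taylor
      (φ' := fun k s => q s * φ k s + k * (k - 1 : ℕ) * φ (k - 2) s) (fun k => hφ' k s hs) p hc).sub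
      (hasDerivWithinAt_umbralEval_taylor (fun k => hφ k s hs) (derivative p) hc)).congr_deriv ?_
    rw [umbralEval_of_second_difference (fun k => rfl), derivative_taylor, derivative_taylor]
    simp only [id, ofReal_one]
    ring

end WaveInstances

section Dilation

open Polynomial

/-- The substitution `G ↦ G (x ·)`, which transports functions on `[-x, x]` to `[-1, 1]`. -/
def dilation (x : ℝ) : C(ℝ, ℂ) →ₐ[ℂ] C(ℝ, ℂ) :=
  ContinuousMap.compRightAlgHom ℂ ℂ ⟨fun s => x * s, by fun_prop⟩

lemma dilation_apply (x : ℝ) (G : C(ℝ, ℂ)) (s : ℝ) : dilation x G s = G (x * s) := rfl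

lemma dilation_aeval_comp {x : ℝ} (hx : x ≠ 0) (p : ℂ[X]) :
    dilation x (aeval (ofRealCLM : C(ℝ, ℂ)) (p.comp (C (x : ℂ)⁻¹ * X))) =
      aeval (ofRealCLM : C(ℝ, ℂ)) p := by
  ext s
  rw [dilation_apply, aeval_continuousMap_apply, aeval_continuousMap_apply]
  simp [hx]

lemma norm_toL2_dilation {x : ℝ} (hx : 0 < x) (G : C(ℝ, ℂ)) :
    ‖toL2 (dilation x G)‖ = √(∫ t in -x..x, ‖G t‖ ^ 2) / √x := by
  simp_rw [norm_toL2, dilation_apply]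
  rw [intervalIntegral.integral_comp_mul_left (fun t => ‖G t‖ ^ 2) hx.ne', smul_eq_mul,
    inv_mul_eq_div, Real.sqrt_div' _ hx.le, mul_neg_one, mul_one]

lemma integral_norm_le_norm_toL2_dilation {x : ℝ} (hx : 0 < x) (G : C(ℝ, ℂ)) :
    ∫ t in -x..x, ‖G t‖ ≤ x * (√2 * ‖toL2 (dilation x G)‖) := by
  calc ∫ t in -x..x, ‖G t‖ = x * ∫ s in (-1 : ℝ)..1, ‖dilation x G s‖ := by
        simp_rw [dilation_apply]
        rw [intervalIntegral.mul_integral_comp_mul_left (f := fun t => ‖G t‖), mul_neg_one, mul_one]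
    _ ≤ _ := by gcongr; exact integral_norm_le_norm_toL2 _

end Dilation

section NeumannSeries

open Polynomial

variable {q f f' : ℝ → ℂ} {x : ℝ}

lemma isWaveSolution_formalPower
    (hf : ∀ s ∈ Set.Icc 0 x, HasDerivWithinAt f (f' s) (Set.Icc 0 x) s)
    (hf' : ∀ s ∈ Set.Icc 0 x, HasDerivWithinAt f' (q s * f s) (Set.Icc 0 x) s)
    (hf0 : f 0 = 1) (hf'0 : f' 0 = 0) (hne : ∀ s ∈ Set.Icc 0 x, f s ≠ 0) (p : ℂ[X]) :
    IsWaveSolution x q (aeval (ofRealCLM : C(ℝ, ℂ)) p)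
      (fun s t => umbralEval (formalPower f · s) (taylor (t : ℂ) p))
      (fun s t => umbralEval (formalPowerDeriv f f' · s) (taylor (t : ℂ) p) -
        umbralEval (formalPower f · s) (taylor (t : ℂ) (derivative p))) :=
  isWaveSolution_umbralEval (fun k _ hs => hasDerivWithinAt_formalPower hf hne k hs)
    (fun k _ hs => hasDerivWithinAt_formalPowerDeriv hf hf' hne k hs)
    (fun k => by rw [formalPower_apply_zero, hf0]) (formalPowerDeriv_apply_zero hf0 hf'0) p

lemma exists_norm_sub_le_norm_toL2 (hq : ContinuousOn q (Set.Icc 0 x)) (hx : 0 < x) :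
    ∃ C, ∀ G W R, IsWaveSolution x q G W R → ‖W x 0 - G x‖ ≤ C * ‖toL2 (dilation x G)‖ := by
  obtain ⟨Q, hQ⟩ := isCompact_Icc.exists_bound_of_continuousOn hq
  refine ⟨Real.exp ((Q + 1) * x) * (x * √2), fun G W R h => ?_⟩
  calc ‖W x 0 - G x‖ ≤ Real.exp ((Q + 1) * x) * ∫ t in -x..x, ‖G t‖ := h.norm_sub_le hx.le hQ
    _ ≤ Real.exp ((Q + 1) * x) * (x * (√2 * ‖toL2 (dilation x G)‖)) := by
        gcongr; exact integral_norm_le_norm_toL2_dilation hx G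
    _ = _ := by ring

/-- The functional `p ↦ Σₖ pₖ φₖ(x) / xᵏ - p(1)` on polynomials: the value at `x` of the
transmutation operator minus the identity, in the coordinate `t / x`. -/
def transmutationFunctional (f : ℝ → ℂ) (x : ℝ) : ℂ[X] →ₗ[ℂ] ℂ :=
  umbralEval (fun k => formalPower f k x / x ^ k) - leval 1

lemma betaCoef_eq_transmutationFunctional (f : ℝ → ℂ) (n : ℕ) (x : ℝ) :
    betaCoef f n x = √((2 * n + 1) / 2) * transmutationFunctional f x (normalizedLegendre n) := by
  have hsq : (√((2 * n + 1) / 2) : ℂ) * √((2 * n + 1) / 2) = (2 * n + 1) / 2 := by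
    rw [← ofReal_mul, Real.mul_self_sqrt (by positivity)]
    push_cast
    rfl
  have hdeg : ((legendreP n).map (algebraMap ℝ ℂ)).natDegree < n + 1 := by
    rw [natDegree_map, natDegree_legendreP]
    exact n.lt_succ_self
  have hone : (legendreP n).eval 1 = 1 := by
    simpa using eval_legendreP_of_sq_eq_one (one_pow 2) n
  rw [normalizedLegendre, C_mul', map_smul, smul_eq_mul, ← mul_assoc, hsq, betaCoef,
    transmutationFunctional, LinearMap.sub_apply, umbralEval_eq_sum_range _ hdeg, leval_apply,
    eval_one_map, hone, map_one]
  simp only [coeff_map, coe_algebraMap, mul_div_assoc]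

lemma transmutationFunctional_eq_sub (f : ℝ → ℂ) (hx : x ≠ 0) (p : ℂ[X]) :
    transmutationFunctional f x p =
      umbralEval (formalPower f · x) (taylor ((0 : ℝ) : ℂ) (p.comp (C (x : ℂ)⁻¹ * X))) -
        aeval (ofRealCLM : C(ℝ, ℂ)) (p.comp (C (x : ℂ)⁻¹ * X)) x := by
  rw [ofReal_zero, taylor_zero, umbralEval_comp_C_mul_X, aeval_continuousMap_apply]
  simp [transmutationFunctional, div_eq_inv_mul, hx]

-- The wave estimate makes `G ↦ W x 0 - G x` bounded for the `L²` norm, although the value of `G`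
-- at a point is not; polynomial data are dense, so the bounded extension covers all data.
lemma exists_continuousLinearMap_apply_dilation_eq (hq : ContinuousOn q (Set.Icc 0 x))
    (hx : 0 < x) (hf : ∀ s ∈ Set.Icc 0 x, HasDerivWithinAt f (f' s) (Set.Icc 0 x) s)
    (hf' : ∀ s ∈ Set.Icc 0 x, HasDerivWithinAt f' (q s * f s) (Set.Icc 0 x) s)
    (hf0 : f 0 = 1) (hf'0 : f' 0 = 0) (hne : ∀ s ∈ Set.Icc 0 x, f s ≠ 0) :
    ∃ Λ : L2Symm →L[ℂ] ℂ, (∀ p, Λ (polyToL2 p) = transmutationFunctional f x p) ∧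
      ∀ G W R, IsWaveSolution x q G W R → Λ (toL2 (dilation x G)) = W x 0 - G x := by
  have hwave := fun p : ℂ[X] =>
    isWaveSolution_formalPower hf hf' hf0 hf'0 hne (p.comp (C (x : ℂ)⁻¹ * X))
  have hL2 (p : ℂ[X]) : toL2 (dilation x (aeval (ofRealCLM : C(ℝ, ℂ))
      (p.comp (C (x : ℂ)⁻¹ * X)))) = polyToL2 p :=
    congrArg toL2 (dilation_aeval_comp hx.ne' p)
  obtain ⟨M, hM⟩ := exists_norm_sub_le_norm_toL2 hq hx
  obtain ⟨Λ, hΛ⟩ := exists_extension_eq_of_norm_sub_le denseRange_polyToL2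
    (L := transmutationFunctional f x) ⟨M, fun p => by
      simpa only [transmutationFunctional_eq_sub f hx.ne', hL2] using hM _ _ _ (hwave p)⟩
  have hΛwave (G W R) (h : IsWaveSolution x q G W R) :
      Λ (toL2 (dilation x G)) = W x 0 - G x := by
    refine hΛ _ _ ⟨M, fun p => ?_⟩
    rw [transmutationFunctional_eq_sub f hx.ne', ← hL2, ← map_sub, ← map_sub, sub_sub_sub_comm]
    exact hM _ _ _ (h.sub (hwave p))
  refine ⟨Λ, fun p => ?_, hΛwave⟩
  rw [← hL2, hΛwave _ _ _ (hwave p), transmutationFunctional_eq_sub f hx.ne']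

/-- The truncated Neumann series `G(x) + ∑_{n < N} βₙ(x) ∫ Pₙ(s) G(xs) ds` over `[-1, 1]`. -/
def neumannTruncation (f : ℝ → ℂ) (G : C(ℝ, ℂ)) (N : ℕ) (x : ℝ) : ℂ :=
  G x + ∑ n ∈ Finset.range N,
    betaCoef f n x * ∫ s in (-1 : ℝ)..1, (((legendreP n).eval s : ℝ) : ℂ) * G (x * s)

lemma sum_apply_legendreBasis_mul_inner {Λ : L2Symm →L[ℂ] ℂ}
    (hΛ : ∀ p, Λ (polyToL2 p) = transmutationFunctional f x p) (G : C(ℝ, ℂ)) (N : ℕ) :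
    ∑ n ∈ Finset.range N, Λ (legendreBasis n) * inner ℂ (legendreBasis n) (toL2 (dilation x G)) =
      neumannTruncation f G N x - G x := by
  rw [neumannTruncation, add_sub_cancel_left]
  refine Finset.sum_congr rfl fun n _ => ?_
  rw [legendreBasis_apply, hΛ, inner_polyToL2_normalizedLegendre,
    betaCoef_eq_transmutationFunctional]
  simp only [dilation_apply]
  ring

theorem exists_norm_sub_neumannTruncation_le (hq : ContinuousOn q (Set.Icc 0 x))
    (hx : 0 < x) (hf : ∀ s ∈ Set.Icc 0 x, HasDerivWithinAt f (f' s) (Set.Icc 0 x) s)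
    (hf' : ∀ s ∈ Set.Icc 0 x, HasDerivWithinAt f' (q s * f s) (Set.Icc 0 x) s)
    (hf0 : f 0 = 1) (hf'0 : f' 0 = 0) (hne : ∀ s ∈ Set.Icc 0 x, f s ≠ 0) :
    ∃ ε : ℕ → ℝ, (∀ N, 0 ≤ ε N) ∧ Tendsto ε atTop (𝓝 0) ∧
      ∀ G W R, IsWaveSolution x q G W R → ∀ N,
        ‖W x 0 - neumannTruncation f G N x‖ ≤ ε N * √(∫ t in -x..x, ‖G t‖ ^ 2) := by
  obtain ⟨Λ, hΛpoly, hΛwave⟩ :=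
    exists_continuousLinearMap_apply_dilation_eq hq hx hf hf' hf0 hf'0 hne
  obtain ⟨δ, hδ0, hδ, htail⟩ := exists_norm_apply_sub_sum_hilbertBasis_le legendreBasis Λ
  refine ⟨fun N => δ N / √x, fun N => div_nonneg (hδ0 N) (Real.sqrt_nonneg x),
    by simpa using hδ.div_const √x, fun G W R h N => ?_⟩
  have hbound := htail N (toL2 (dilation x G))
  rwa [hΛwave G W R h, sum_apply_legendreBasis_mul_inner hΛpoly, sub_sub_sub_cancel_right,
    norm_toL2_dilation hx, ← mul_div_assoc, ← div_mul_eq_mul_div] at hbound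

end NeumannSeries

lemma integral_norm_expC_sq (ω t : ℝ) : ∫ s in -t..t, ‖expC ω s‖ ^ 2 = 2 * t := by
  have hone (s : ℝ) : ‖expC ω s‖ = 1 := by
    simpa [expC, mul_assoc, mul_comm I] using norm_exp_ofReal_mul_I (ω * s)
  simp [hone, two_mul]

theorem NSBF_truncation_error_real_omega_general {b : ℝ} {q f f' : ℝ → ℂ}
    (hq : ContinuousOn q (Set.Icc 0 b))
    (hf : ∀ x ∈ Set.Icc 0 b, HasDerivWithinAt f (f' x) (Set.Icc 0 b) x)
    (hf' : ∀ x ∈ Set.Icc 0 b, HasDerivWithinAt f' (q x * f x) (Set.Icc 0 b) x)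
    (hf0 : f 0 = 1) (hf'0 : f' 0 = 0) (hne : ∀ x ∈ Set.Icc 0 b, f x ≠ 0) :
    ∃ ε : ℕ → ℝ → ℝ,
      (∀ N, ∀ x ∈ Set.Ioc 0 b, 0 ≤ ε N x) ∧
      (∀ x ∈ Set.Ioc 0 b, Tendsto (fun N => ε N x) atTop (𝓝 0)) ∧
      ∀ (ω : ℂ) (y y' : ℝ → ℂ),
        (∀ x ∈ Set.Icc 0 b, HasDerivWithinAt y (y' x) (Set.Icc 0 b) x) →
        (∀ x ∈ Set.Icc 0 b,
          HasDerivWithinAt y' (q x * y x - ω ^ 2 * y x) (Set.Icc 0 b) x) →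
        y 0 = 1 → y' 0 = I * ω →
        ∀ N, ∀ x ∈ Set.Ioc 0 b, ‖y x - neumannTruncation f (expC ω) N x‖ ≤
          ε N x * √(∫ t in -x..x, ‖expC ω t‖ ^ 2) := by
  have hsub {x : ℝ} (hx : x ∈ Set.Ioc 0 b) : Set.Icc 0 x ⊆ Set.Icc 0 b :=
    Set.Icc_subset_Icc_right hx.2
  have hfixed (x : ℝ) (hx : x ∈ Set.Ioc 0 b) :=
    exists_norm_sub_neumannTruncation_le (hq.mono (hsub hx)) hx.1
      (fun s hs => (hf s (hsub hx hs)).mono (hsub hx))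
      (fun s hs => (hf' s (hsub hx hs)).mono (hsub hx)) hf0 hf'0 fun s hs => hne s (hsub hx hs)
  choose! ε hε0 hε hbound using hfixed
  refine ⟨fun N x => ε x N, fun N x hx => hε0 x hx N, hε, fun ω y y' hy hy' hy0 hy'0 N x hx => ?_⟩
  have hwave : IsWaveSolution x q _ _ _ := isWaveSolution_exp
    (fun s hs => (hy s (hsub hx hs)).mono (hsub hx))
    (fun s hs => (hy' s (hsub hx hs)).mono (hsub hx)) hy0 hy'0
  simpa [expC] using hbound x hx _ _ _ hwave N

/-- ω-independent error bound for the truncated NSBF representation, ω ∈ ℝ. -/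
theorem NSBF_truncation_error_real_omega
    (b : ℝ) (hb : 0 < b) (q : ℝ → ℂ) (hq : ContinuousOn q (Set.Icc (-b) b))
    (f f' : ℝ → ℂ)
    (hf : ∀ x ∈ Set.Icc (-b) b, HasDerivAt f (f' x) x)
    (hf' : ∀ x ∈ Set.Icc (-b) b, HasDerivAt f' (q x * f x) x)
    (hf0 : f 0 = 1) (hf'0 : f' 0 = 0)
    (hfne : ∀ x ∈ Set.Icc (-b) b, f x ≠ 0) :
    ∃ ε : ℕ → ℝ → ℝ,
      (∀ N : ℕ, ∀ x ∈ Set.Ioc (0:ℝ) b, 0 ≤ ε N x) ∧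
      (∀ x ∈ Set.Ioc (0:ℝ) b, Tendsto (fun N : ℕ => ε N x) atTop (𝓝 0)) ∧
      ∀ (ω : ℝ) (y y' : ℝ → ℂ),
        (∀ x ∈ Set.Icc (-b) b, HasDerivAt y (y' x) x) →
        (∀ x ∈ Set.Icc (-b) b, HasDerivAt y' (q x * y x - (ω : ℂ) ^ 2 * y x) x) →
        y 0 = 1 → y' 0 = Complex.I * ω →
        ∀ (N : ℕ), ∀ x ∈ Set.Ioc (0:ℝ) b,
          ‖y x - (fun (w : ℂ) (N : ℕ) (x : ℝ) => Complex.exp (Complex.I * w * x) +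
        ∑ n ∈ Finset.range N, betaCoef f n x *
          ∫ s in (-1:ℝ)..1, (((legendreP n).eval s : ℝ) : ℂ) * Complex.exp (Complex.I * w * x * s)) ω N x‖ ≤ ε N x * Real.sqrt (2 * x) := by
  have hsub : Set.Icc 0 b ⊆ Set.Icc (-b) b := Set.Icc_subset_Icc_left (neg_nonpos.2 hb.le)
  obtain ⟨ε, hε0, hε, hbound⟩ := NSBF_truncation_error_real_omega_general (hq.mono hsub)
    (fun x hx => (hf x (hsub hx)).hasDerivWithinAt)
    (fun x hx => (hf' x (hsub hx)).hasDerivWithinAt) hf0 hf'0 fun x hx => hfne x (hsub hx)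
  refine ⟨ε, hε0, hε, fun ω y y' hy hy' hy0 hy'0 N x hx => ?_⟩
  have h := hbound ω y y' (fun x hx => (hy x (hsub hx)).hasDerivWithinAt)
    (fun x hx => (hy' x (hsub hx)).hasDerivWithinAt) hy0 hy'0 N x hx
  rw [integral_norm_expC_sq] at h
  simpa [neumannTruncation, expC, mul_assoc] using h

end
end
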